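/- arXiv:2001.02470 — 3 statements merged into one kernel-verified Lean document; each statement's English description precedes it below -/
import Mathlib

section
/- Suppose a is contained in the Jacobson radical of R and cd(a,M) = ara(a,M). Assume r := grade(a,M) < c := cd(a,M) and H^i_a(M) = 0 for all i ≠ r, c. Then the following are equivalent: (i) M is a-relative surjective Buchsbaum; (ii) M is a-relative Buchsbaum; (iii) M is a-relative quasi Buchsbaum. -/
/-!
Formalization of a statement from "A theory of relative generalized Cohen-Macaulay modules"
by Divaani-Aazar, Ghanbari Doust, Tousi and Zakeri.

Throughout, `R` is a commutative Noetherian ring and `M` a finitely generated `R`-module.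
Conventions used below:
* `locH I i M` is the local cohomology module `H^i_I(M)` (Mathlib's `localCohomology`).
* Conditions `cd(I,M) = c`, `ara(I,M) = n`, `f_I(M) = f`, `grade(I,M) = r` are expressed by
  the predicates `IsCd`, `IsAra`, `IsFinDim`, `IsGrade`.
* Sequences are given as functions `Fin r → R`; `pSpan M x i = ⟨x_0,…,x_{i-1}⟩M`.
* Koszul (co)homology is defined via the explicit (co)chain complex on the `p`-element
  subsets of `{0,…,n-1}`, and the canonical map `λ^i` into local cohomology is the structure
  map (at exponent 1) into the direct limit of Koszul cohomologies of powers of the sequence,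
  which is the realization of `H^i_{⟨x⟩}(M)` used in the paper (2.1(iv)).
-/

open CategoryTheory

noncomputable section

variable {R : Type} [CommRing R]

/-! ### Sequences: prefix spans, weak sequences, filter regular sequences, d-sequences -/

/-- `pSpan M x i` is the submodule `⟨x_0, …, x_{i-1}⟩M` of `M`. -/
def pSpan (M : Type) [AddCommGroup M] [Module R M] {r : ℕ} (x : Fin r → R) (i : Fin r) :
    Submodule R M :=
  Ideal.span (x '' {j | j < i}) • (⊤ : Submodule R M)

/-- `x_1, …, x_r` is an `I`-weak sequence on `M`:
`(⟨x_1,…,x_{i-1}⟩M :_M x_i) ⊆ (⟨x_1,…,x_{i-1}⟩M :_M I)` for all `i`. -/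
def IsWeakSeq (I : Ideal R) (M : Type) [AddCommGroup M] [Module R M] {r : ℕ}
    (x : Fin r → R) : Prop :=
  ∀ i : Fin r, ∀ m : M, x i • m ∈ pSpan M x i → ∀ a ∈ I, a • m ∈ pSpan M x i

/-- `x_1, …, x_r` is an `I`-filter regular sequence on `M`:
`(⟨x_1,…,x_{i-1}⟩M :_M x_i) ⊆ ⋃ₜ (⟨x_1,…,x_{i-1}⟩M :_M I^t)` for all `i`. -/
def IsFilterRegSeq (I : Ideal R) (M : Type) [AddCommGroup M] [Module R M] {r : ℕ}
    (x : Fin r → R) : Prop :=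
  ∀ i : Fin r, ∀ m : M, x i • m ∈ pSpan M x i →
    ∃ t : ℕ, ∀ a ∈ I ^ t, a • m ∈ pSpan M x i

/-- An unconditioned `I`-filter regular sequence: filter regular in any order. -/
def IsUncondFilterRegSeq (I : Ideal R) (M : Type) [AddCommGroup M] [Module R M] {r : ℕ}
    (x : Fin r → R) : Prop :=
  ∀ σ : Equiv.Perm (Fin r), IsFilterRegSeq I M (x ∘ σ)

/-- An unconditioned `I`-weak sequence: all positive powers, in any order, form an
`I`-weak sequence. -/
def IsUncondWeakSeq (I : Ideal R) (M : Type) [AddCommGroup M] [Module R M] {r : ℕ}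
    (x : Fin r → R) : Prop :=
  ∀ σ : Equiv.Perm (Fin r), ∀ α : Fin r → ℕ, (∀ k, 0 < α k) →
    IsWeakSeq I M fun k => x (σ k) ^ α k

/-- `x_1, …, x_r` is a d-sequence on `M`:
`(⟨x_1,…,x_{i-1}⟩M :_M x_i x_j) = (⟨x_1,…,x_{i-1}⟩M :_M x_j)` for all `i ≤ j`. -/
def IsDSeq (M : Type) [AddCommGroup M] [Module R M] {r : ℕ} (x : Fin r → R) : Prop :=
  ∀ i j : Fin r, i ≤ j → ∀ m : M,
    ((x i * x j) • m ∈ pSpan M x i ↔ x j • m ∈ pSpan M x i)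

/-- An u.s.d-sequence on `M`: all positive powers, in any order, form a d-sequence. -/
def IsUSDSeq (M : Type) [AddCommGroup M] [Module R M] {r : ℕ} (x : Fin r → R) : Prop :=
  ∀ σ : Equiv.Perm (Fin r), ∀ α : Fin r → ℕ, (∀ k, 0 < α k) →
    IsDSeq M fun k => x (σ k) ^ α k

/-! ### Local cohomology, cohomological dimension, arithmetic rank -/

/-- The `i`-th local cohomology module `H^i_I(M)`. -/
abbrev locH (I : Ideal R) (i : ℕ) (M : Type) [AddCommGroup M] [Module R M] : ModuleCat R :=
  (localCohomology I i).obj (ModuleCat.of R M)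

/-- `cd(I, M) = c`: the cohomological dimension of `I` on `M` equals `c`, i.e.
`H^c_I(M) ≠ 0` and `H^i_I(M) = 0` for all `i > c`. -/
def IsCd (I : Ideal R) (M : Type) [AddCommGroup M] [Module R M] (c : ℕ) : Prop :=
  Nontrivial (locH I c M) ∧ ∀ i : ℕ, c < i → Subsingleton (locH I i M)

/-- `f_I(M) = f`: the `I`-finiteness dimension of `M` equals `f`, i.e. `f` is the least
integer such that `H^f_I(M)` is not finitely generated. -/
def IsFinDim (I : Ideal R) (M : Type) [AddCommGroup M] [Module R M] (f : ℕ) : Prop :=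
  (∀ i : ℕ, i < f → Module.Finite R (locH I i M)) ∧ ¬ Module.Finite R (locH I f M)

/-- `M` is `I`-relative generalized Cohen-Macaulay: `cd(I,M) ≤ 0` or `cd(I,M) = f_I(M)`. -/
def IsRelGCM (I : Ideal R) (M : Type) [AddCommGroup M] [Module R M] : Prop :=
  (∀ i : ℕ, 0 < i → Subsingleton (locH I i M)) ∨
    ∃ c : ℕ, IsCd I M c ∧ IsFinDim I M c

/-- `ara(I, M) = n`: the arithmetic rank of `I` with respect to `M` equals `n`, i.e. `n` is the
least integer such that there are `x_1, …, x_n ∈ R` with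
`Rad(⟨x_1,…,x_n⟩ + Ann M) = Rad(I + Ann M)`. -/
def IsAra (I : Ideal R) (M : Type) [AddCommGroup M] [Module R M] (n : ℕ) : Prop :=
  IsLeast {k : ℕ | ∃ x : Fin k → R,
    (Ideal.span (Set.range x) + Module.annihilator R M).radical
      = (I + Module.annihilator R M).radical} n

/-- `x_1, …, x_c` is an `I`-relative system of parameters of `M` (where `c = cd(I,M)`):
the `x_i` lie in `I` and `Rad(⟨x_1,…,x_c⟩ + Ann M) = Rad(I + Ann M)`. -/
def IsRsop (I : Ideal R) (M : Type) [AddCommGroup M] [Module R M] {c : ℕ}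
    (x : Fin c → R) : Prop :=
  (∀ j, x j ∈ I) ∧
    (Ideal.span (Set.range x) + Module.annihilator R M).radical
      = (I + Module.annihilator R M).radical

/-! ### Relative Buchsbaum and relative quasi Buchsbaum modules -/

/-- `M` is `I`-relative Buchsbaum: `cd(I,M) = ara(I,M)` and every `I`-relative system of
parameters of `M` is an `I`-weak sequence on `M`. -/
def IsRelBuchsbaum (I : Ideal R) (M : Type) [AddCommGroup M] [Module R M] : Prop :=
  ∃ c : ℕ, IsCd I M c ∧ IsAra I M c ∧
    ∀ x : Fin c → R, IsRsop I M x → IsWeakSeq I M x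

/-- `M` is `I`-relative quasi Buchsbaum: `cd(I,M) = ara(I,M)` and every `I`-relative system of
parameters of `M` contained in `I²` is an `I`-weak sequence on `M`. -/
def IsRelQuasiBuchsbaum (I : Ideal R) (M : Type) [AddCommGroup M] [Module R M] : Prop :=
  ∃ c : ℕ, IsCd I M c ∧ IsAra I M c ∧
    ∀ x : Fin c → R, IsRsop I M x → (∀ j, x j ∈ I ^ 2) → IsWeakSeq I M x

/-! ### The natural maps `φ^i_M : Ext^i(R/I, M) → H^i_I(M)` and relative surjective
Buchsbaum modules -/

/-- The `i`-th Ext module `Ext^i_R(R/I, M)`. -/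
abbrev extH (I : Ideal R) (i : ℕ) (M : Type) [AddCommGroup M] [Module R M] : ModuleCat R :=
  ((Ext R (ModuleCat R) i).obj (Opposite.op (ModuleCat.of R (R ⧸ I)))).obj (ModuleCat.of R M)

/-- The natural map `φ^i_M : Ext^i_R(R/I, M) → H^i_I(M)`, i.e. the structure map into the
colimit `H^i_I(M) = colim_n Ext^i_R(R/I^n, M)` at `n = 1`. -/
def phi (I : Ideal R) (i : ℕ) (M : Type) [AddCommGroup M] [Module R M] :
    ((localCohomology.diagram (localCohomology.idealPowersDiagram I) i).obj
        (Opposite.op (Opposite.op (1 : ℕ)))).obj (ModuleCat.of R M) ⟶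
      (localCohomology I i).obj (ModuleCat.of R M) :=
  have := localCohomology.hasColimitDiagram.{0, 0} (localCohomology.idealPowersDiagram I) i
  (Limits.colimit.ι (localCohomology.diagram (localCohomology.idealPowersDiagram I) i)
      (Opposite.op (Opposite.op (1 : ℕ)))).app (ModuleCat.of R M)

/-- `φ^i_M` is surjective. -/
def PhiSurj (I : Ideal R) (i : ℕ) (M : Type) [AddCommGroup M] [Module R M] : Prop :=
  Function.Surjective (phi I i M)

/-- `M` is `I`-relative surjective Buchsbaum: `φ^i_M` is surjective for all `i < cd(I,M)`. -/
def IsRelSurjBuchsbaum (I : Ideal R) (M : Type) [AddCommGroup M] [Module R M] : Prop :=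
  ∀ i : ℕ, (∃ j : ℕ, i < j ∧ Nontrivial (locH I j M)) → PhiSurj I i M

/-- `grade(I, M) = r`: `r` is the least integer with `Ext^r_R(R/I, M) ≠ 0`. -/
def IsGrade (I : Ideal R) (M : Type) [AddCommGroup M] [Module R M] (r : ℕ) : Prop :=
  Nontrivial (extH I r M) ∧ ∀ i : ℕ, i < r → Subsingleton (extH I i M)


namespace RelB
open Limits

section Abstract
variable {D : Type*} [Category D] [Abelian D] {J : D} 

/-- The morphism out of `L ≅ H_n(K)` determined by `k : K_n ⟶ J`. -/
def cl {L : D} {K : ChainComplex D ℕ} {n : ℕ} (i : L ≅ K.homology n) (k : K.X n ⟶ J)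
    (hk : K.d (n+1) n ≫ k = 0) : L ⟶ J :=
  i.hom ≫ K.homologyι n ≫ K.descOpcycles k (n+1) (by simp) hk

lemma cl_surj [Injective J] {L : D} {K : ChainComplex D ℕ} {n : ℕ} (i : L ≅ K.homology n)
    (l : L ⟶ J) : ∃ k hk, cl i k hk = l := by
  let m := Injective.factorThru (i.inv ≫ l) (K.homologyι n)
  have hm : K.homologyι n ≫ m = i.inv ≫ l := Injective.comp_factorThru _ _
  refine ⟨K.pOpcycles n ≫ m, by simp, ?_⟩
  have : K.descOpcycles (K.pOpcycles n ≫ m) (n+1) (by simp) (by simp) = m := by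
    rw [← cancel_epi (K.pOpcycles n), HomologicalComplex.p_descOpcycles]
  unfold cl
  rw [this, hm, Iso.hom_inv_id_assoc]

lemma cl_zero_iff [Injective J] {L : D} {K : ChainComplex D ℕ} {n : ℕ} (i : L ≅ K.homology n)
    (k : K.X n ⟶ J) (hk : K.d (n+1) n ≫ k = 0) :
    cl i k hk = 0 ↔ ∃ h : K.X ((ComplexShape.down ℕ).next n) ⟶ J, K.d n _ ≫ h = k := by
  unfold cl
  rw [← cancel_epi i.inv, Iso.inv_hom_id_assoc, comp_zero]
  constructor
  · intro h
    let S : ShortComplex D := ShortComplex.mk (K.homologyι n)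
      (K.fromOpcycles n ((ComplexShape.down ℕ).next n)) (by simp)
    have hS : S.Exact := S.exact_of_f_is_kernel (K.homologyIsKernel n _ rfl)
    have hu : K.fromOpcycles n ((ComplexShape.down ℕ).next n) ≫ 
        hS.descToInjective (K.descOpcycles k (n+1) (by simp) hk) h = 
        K.descOpcycles k (n+1) (by simp) hk :=
      hS.comp_descToInjective _ h
    refine ⟨hS.descToInjective (K.descOpcycles k (n+1) (by simp) hk) h, ?_⟩
    have h1 : K.pOpcycles n ≫ K.fromOpcycles n ((ComplexShape.down ℕ).next n) = K.d n _ :=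
      HomologicalComplex.p_fromOpcycles _ _ _
    refine (congrArg (· ≫ _) h1.symm).trans ?_
    refine (Category.assoc _ _ _).trans ((congrArg (_ ≫ ·) hu).trans ?_)
    exact HomologicalComplex.p_descOpcycles _ _ _ _ _
  · rintro ⟨h, rfl⟩
    exact K.homologyι_descOpcycles_eq_zero_of_boundary _ _ _ h rfl

lemma cl_sub {L : D} {K : ChainComplex D ℕ} {n : ℕ} (i : L ≅ K.homology n) (k k' : K.X n ⟶ J)
    (hk : K.d (n+1) n ≫ k = 0) (hk' : K.d (n+1) n ≫ k' = 0) (hs : K.d (n+1) n ≫ (k - k') = 0) :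
    cl i (k - k') hs = cl i k hk - cl i k' hk' := by
  unfold cl
  rw [← Preadditive.comp_sub, ← Preadditive.comp_sub]
  congr 2
  rw [← cancel_epi (K.pOpcycles n), Preadditive.comp_sub]
  simp only [HomologicalComplex.p_descOpcycles]

lemma comp_cl {L L' : D} {K K' : ChainComplex D ℕ} {n : ℕ} (i : L ≅ K.homology n)
    (i' : L' ≅ K'.homology n) (f : L' ⟶ L) (φ : K' ⟶ K) 
    (hf : f ≫ i.hom = i'.hom ≫ HomologicalComplex.homologyMap φ n)
    (k : K.X n ⟶ J) (hk : K.d (n+1) n ≫ k = 0) (hk' : K'.d (n+1) n ≫ φ.f n ≫ k = 0) :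
    f ≫ cl i k hk = cl i' (φ.f n ≫ k) hk' := by
  unfold cl
  rw [reassoc_of% hf, HomologicalComplex.homologyι_naturality_assoc, 
    HomologicalComplex.opcyclesMap_comp_descOpcycles]

end Abstract

instance inj_op : Injective (Opposite.op (ModuleCat.of R R)) := by
  have : Projective (ModuleCat.of R R) := ModuleCat.projective_of_free (Module.Basis.singleton Unit R)
  infer_instance

/-- elements as morphisms in the opposite category -/
def toHom (L : (ModuleCat.{0} R)ᵒᵖ) (e : L.unop) : L ⟶ Opposite.op (ModuleCat.of R R) :=
  Quiver.Hom.op (ModuleCat.ofHom (LinearMap.toSpanSingleton R L.unop e))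

def ofHom' (L : (ModuleCat.{0} R)ᵒᵖ) (l : L ⟶ Opposite.op (ModuleCat.of R R)) : L.unop :=
  l.unop.hom (1 : R)

lemma of_to (L : (ModuleCat.{0} R)ᵒᵖ) (e : L.unop) : ofHom' L (toHom L e) = e := one_smul R e

lemma to_of (L : (ModuleCat.{0} R)ᵒᵖ) (l : L ⟶ Opposite.op (ModuleCat.of R R)) :
    toHom L (ofHom' L l) = l := by
  apply Quiver.Hom.unop_inj
  apply ModuleCat.hom_ext
  apply LinearMap.ext_ring
  exact one_smul R _

lemma to_inj (L : (ModuleCat.{0} R)ᵒᵖ) {e e' : L.unop} (h : toHom L e = toHom L e') : e = e' := by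
  rw [← of_to L e, h, of_to]

lemma of_sub (L : (ModuleCat.{0} R)ᵒᵖ) (l l' : L ⟶ Opposite.op (ModuleCat.of R R)) :
    ofHom' L (l - l') = ofHom' L l - ofHom' L l' := rfl

lemma of_zero (L : (ModuleCat.{0} R)ᵒᵖ) : 
    ofHom' L (0 : L ⟶ Opposite.op (ModuleCat.of R R)) = 0 := rfl

lemma to_zero (L : (ModuleCat.{0} R)ᵒᵖ) : 
    toHom L (0 : L.unop) = 0 := by rw [← of_zero, to_of]

lemma to_sub (L : (ModuleCat.{0} R)ᵒᵖ) (e e' : L.unop) : 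
    toHom L (e - e') = toHom L e - toHom L e' := by 
  rw [← to_of L (toHom L e - toHom L e'), of_sub, of_to, of_to]

lemma of_comp {L L' : (ModuleCat.{0} R)ᵒᵖ} (f : L' ⟶ L) (l : L ⟶ Opposite.op (ModuleCat.of R R)) :
    ofHom' L' (f ≫ l) = f.unop.hom (ofHom' L l) := rfl

lemma comp_to {L L' : (ModuleCat.{0} R)ᵒᵖ} (f : L' ⟶ L) (e : L.unop) :
    f ≫ toHom L e = toHom L' (f.unop.hom e) := by
  rw [← to_of L' (f ≫ toHom L e), of_comp, of_to]

section Bridge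
variable {X Y : ModuleCat.{0} R}

/-- the functor Hom(-,Y) to the opposite category -/
abbrev FY (Y : ModuleCat.{0} R) : ModuleCat.{0} R ⥤ (ModuleCat.{0} R)ᵒᵖ :=
  ((linearYoneda R (ModuleCat.{0} R)).obj Y).rightOp

/-- an element of a Hom-module as a morphism in the opposite category to `op R` -/
def kOf {X Y : ModuleCat.{0} R} (g : X ⟶ Y) :
    (FY Y).obj X ⟶ Opposite.op (ModuleCat.of R R) := toHom _ g

lemma map_kOf {X' : ModuleCat.{0} R} (f : X' ⟶ X) (g : X ⟶ Y) :
    (FY Y).map f ≫ kOf g = kOf (f ≫ g) := comp_to _ _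

/-- the chosen resolution -/
abbrev PR (X : ModuleCat.{0} R) : ProjectiveResolution X := projectiveResolution X

/-- the complex Hom(P,Y) in the opposite category -/
def KY (X Y : ModuleCat.{0} R) : ChainComplex (ModuleCat.{0} R)ᵒᵖ ℕ :=
  ((FY Y).mapHomologicalComplex _).obj (PR X).complex

def isoKY (X Y : ModuleCat.{0} R) (n : ℕ) : ((FY Y).leftDerived n).obj X ≅ (KY X Y).homology n :=
  (PR X).isoLeftDerivedObj (FY Y) n

/-- `kOf` with the right type -/
def kK {n : ℕ} (g : (PR X).complex.X n ⟶ Y) : (KY X Y).X n ⟶ Opposite.op (ModuleCat.of R R) := 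
  kOf g

lemma kK_surj {n : ℕ} (k : (KY X Y).X n ⟶ Opposite.op (ModuleCat.of R R)) : 
    ∃ g : (PR X).complex.X n ⟶ Y, kK g = k := ⟨ofHom' _ k, to_of _ k⟩

lemma kK_inj {n : ℕ} {g g' : (PR X).complex.X n ⟶ Y} (h : kK g = kK g') : g = g' := 
  to_inj _ h

lemma d_kK {n m : ℕ} (g : (PR X).complex.X n ⟶ Y) : 
    (KY X Y).d m n ≫ kK g = kK ((PR X).complex.d m n ≫ g) := map_kOf _ _

lemma kK_zero {n : ℕ} : kK (0 : (PR X).complex.X n ⟶ Y) = 0 := to_zero _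

lemma kK_sub {n : ℕ} (g g' : (PR X).complex.X n ⟶ Y) : kK (g - g') = kK g - kK g' := to_sub _ _ _

lemma cond {n : ℕ} {g : (PR X).complex.X n ⟶ Y} (hg : (PR X).complex.d (n+1) n ≫ g = 0) :
    (KY X Y).d (n+1) n ≫ kK g = 0 := by
  rw [d_kK, hg, kK_zero]

/-- `Ext` of Mathlib defined as derived functor. -/
abbrev OldExt (X Y : ModuleCat.{0} R) (n : ℕ) : ModuleCat R :=
  ((Ext R (ModuleCat.{0} R) n).obj (Opposite.op X)).obj Y

/-- class of a cocycle -/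
def ecl {n : ℕ} (g : (PR X).complex.X n ⟶ Y) (hg : (PR X).complex.d (n+1) n ≫ g = 0) :
    OldExt X Y n :=
  ofHom' (((FY Y).leftDerived n).obj X) (cl (isoKY X Y n) (kK g) (cond hg))

lemma ecl_surj {n : ℕ} (e : OldExt X Y n) : ∃ g hg, ecl (n := n) g hg = e := by
  obtain ⟨k, hk, h⟩ := cl_surj (isoKY X Y n) (toHom (((FY Y).leftDerived n).obj X) e)
  obtain ⟨g, rfl⟩ := kK_surj k
  refine ⟨g, ?_, ?_⟩
  · apply kK_inj
    rw [← d_kK, hk, kK_zero]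
  · unfold ecl
    rw [h]
    exact of_to (((FY Y).leftDerived n).obj X) e

lemma ecl_zero_iff {n : ℕ} (g : (PR X).complex.X n ⟶ Y) (hg : (PR X).complex.d (n+1) n ≫ g = 0) :
    ecl g hg = 0 ↔ ∃ h : (PR X).complex.X ((ComplexShape.down ℕ).next n) ⟶ Y,
      (PR X).complex.d n _ ≫ h = g := by
  have h1 : ecl g hg = 0 ↔ cl (isoKY X Y n) (kK g) (cond hg) = 0 := by
    constructor
    · intro h
      rw [← to_of _ (cl (isoKY X Y n) (kK g) (cond hg))]
      exact (congrArg (toHom (((FY Y).leftDerived n).obj X)) h).trans (to_zero _)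
    · intro h
      unfold ecl
      rw [h]; rfl
  rw [h1, cl_zero_iff]
  constructor
  · rintro ⟨h, hh⟩
    obtain ⟨h, rfl⟩ := kK_surj h
    exact ⟨h, kK_inj (by rw [← d_kK, hh])⟩
  · rintro ⟨h, rfl⟩
    exact ⟨kK h, d_kK h⟩

lemma ecl_sub {n : ℕ} (g g' : (PR X).complex.X n ⟶ Y)
    (hg : (PR X).complex.d (n+1) n ≫ g = 0) (hg' : (PR X).complex.d (n+1) n ≫ g' = 0)
    (hs : (PR X).complex.d (n+1) n ≫ (g - g') = 0) :
    ecl (g - g') hs = ecl g hg - ecl g' hg' := by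
  unfold ecl
  have h := cl_sub (isoKY X Y n) (kK g) (kK g') (cond hg) (cond hg')
    (by rw [← kK_sub]; exact cond hs)
  simp only [kK_sub, h]
  rfl

lemma map_ecl {X' : ModuleCat.{0} R} (f : X' ⟶ X) {n : ℕ} (g : (PR X).complex.X n ⟶ Y)
    (hg : (PR X).complex.d (n+1) n ≫ g = 0) (φ : ProjectiveResolution.Hom (PR X') (PR X) f)
    (hg' : (PR X').complex.d (n+1) n ≫ φ.hom.f n ≫ g = 0) :
    (((Ext R (ModuleCat.{0} R) n).map f.op).app Y).hom (ecl g hg) =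
      ecl (φ.hom.f n ≫ g) hg' := by
  have h := ProjectiveResolution.isoLeftDerivedObj_hom_naturality f (PR X') (PR X) φ.hom
    (by exact φ.hom_f_zero_comp_π_f_zero) (FY Y) n
  let φ' : KY X' Y ⟶ KY X Y := ((FY Y).mapHomologicalComplex _).map φ.hom
  have h2 : φ'.f n ≫ kK g = kK (φ.hom.f n ≫ g) := map_kOf _ _
  have h3 := comp_cl (isoKY X Y n) (isoKY X' Y n) (((FY Y).leftDerived n).map f) φ' h (kK g)
    (cond hg) (by rw [h2]; exact cond hg')
  simp only [h2] at h3
  unfold ecl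
  rw [← h3]
  rfl

end Bridge
end RelB


namespace RelB
open Limits

section NB
variable {X Y : ModuleCat.{0} R}

lemma extMk_zero_iff {n : ℕ} (g : (PR X).complex.X n ⟶ Y)
    (hg : (PR X).complex.d (n+1) n ≫ g = 0) :
    (PR X).extMk g (n+1) rfl hg = 0 ↔
      ∃ h : (PR X).complex.X ((ComplexShape.down ℕ).next n) ⟶ Y,
        (PR X).complex.d n _ ≫ h = g := by
  cases n with
  | zero =>
    have hd : (PR X).complex.d 0 ((ComplexShape.down ℕ).next 0) = 0 := by
      apply (PR X).complex.shape
      simp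
    constructor
    · intro h
      have h0 : g = 0 := by
        have h1 := congrArg (PR X).extEquivCohomologyClass h
        rw [ProjectiveResolution.extEquivCohomologyClass_extMk, 
          ProjectiveResolution.extEquivCohomologyClass_zero,
          CochainComplex.HomComplex.CohomologyClass.mk_eq_zero_iff,
          CochainComplex.HomComplex.Cocycle.toSingleMk_mem_coboundaries_iff _ _ _ _ _ 1 (by simp)] at h1
        obtain ⟨u, hu⟩ := h1
        rw [← cancel_epi ((PR X).cochainComplexXIso (-(0:ℕ)) 0 rfl).hom, ← hu, comp_zero]
        have : IsZero ((PR X).cochainComplex.X 1) := 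
          (PR X).cochainComplex.isZero_of_isStrictlyLE 0 1 
        rw [this.eq_of_src u 0, comp_zero]
      exact ⟨0, by rw [h0, comp_zero]⟩
    · rintro ⟨h, rfl⟩
      simp
  | succ p =>
    have : (ComplexShape.down ℕ).next (p+1) = p := by simp
    rw [this]
    exact ProjectiveResolution.extMk_eq_zero_iff _ _ _ _ _ _ rfl

/-- comparison of the two versions of `Ext` -/
def nb {n : ℕ} (e : OldExt X Y n) : Abelian.Ext X Y n :=
  (PR X).extMk (ecl_surj e).choose (n+1) rfl (ecl_surj e).choose_spec.choose

lemma nb_ecl {n : ℕ} (g : (PR X).complex.X n ⟶ Y)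
    (hg : (PR X).complex.d (n+1) n ≫ g = 0) : nb (ecl g hg) = (PR X).extMk g (n+1) rfl hg := by
  have h := (ecl_surj (ecl g hg)).choose_spec.choose_spec
  unfold nb
  rw [← sub_eq_zero, ProjectiveResolution.sub_extMk, extMk_zero_iff, ← ecl_zero_iff, 
    ecl_sub _ _ (ecl_surj (ecl g hg)).choose_spec.choose hg, h, sub_self]
  simp [hg, (ecl_surj (ecl g hg)).choose_spec.choose]

lemma nb_sub {n : ℕ} (e e' : OldExt X Y n) : nb (e - e') = nb e - nb e' := by
  obtain ⟨g, hg, rfl⟩ := ecl_surj e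
  obtain ⟨g', hg', rfl⟩ := ecl_surj e'
  rw [← ecl_sub g g' hg hg' (by simp [hg, hg']), nb_ecl, nb_ecl, nb_ecl, 
    ProjectiveResolution.sub_extMk]

lemma nb_eq_zero {n : ℕ} (e : OldExt X Y n) : nb e = 0 ↔ e = 0 := by
  obtain ⟨g, hg, rfl⟩ := ecl_surj e
  rw [nb_ecl, extMk_zero_iff, ecl_zero_iff]

lemma nb_inj {n : ℕ} {e e' : OldExt X Y n} : nb e = nb e' ↔ e = e' := by
  rw [← sub_eq_zero, ← nb_sub, nb_eq_zero, sub_eq_zero]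

lemma nb_surj {n : ℕ} (e : Abelian.Ext X Y n) : ∃ e' : OldExt X Y n, nb e' = e := by
  obtain ⟨g, hg, rfl⟩ := (PR X).extMk_surjective e (n+1) rfl
  exact ⟨ecl g hg, nb_ecl g hg⟩

lemma nb_map {X' : ModuleCat.{0} R} (f : X' ⟶ X) {n : ℕ} (e : OldExt X Y n) :
    nb ((((Ext R (ModuleCat.{0} R) n).map f.op).app Y).hom e) = 
      (Abelian.Ext.mk₀ f).comp (nb e) (zero_add n) := by
  obtain ⟨g, hg, rfl⟩ := ecl_surj e
  let φ : ProjectiveResolution.Hom (PR X') (PR X) f :=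
    { hom := ProjectiveResolution.lift f (PR X') (PR X)
      hom_f_zero_comp_π_f_zero := by
        have := ProjectiveResolution.lift_commutes f (PR X') (PR X)
        exact HomologicalComplex.congr_hom this 0 }
  have hg' : (PR X').complex.d (n+1) n ≫ φ.hom.f n ≫ g = 0 := by
    rw [← φ.hom.comm_assoc, hg, comp_zero]
  rw [map_ecl f g hg φ hg', nb_ecl, nb_ecl, ProjectiveResolution.mk₀_comp_extMk _ _ _ _ φ]

end NB

/-- `R/I^n` -/
abbrev Q (I : Ideal R) (n : ℕ) : ModuleCat.{0} R := ModuleCat.of R (R ⧸ I ^ n)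

/-- transition maps -/
def tr (I : Ideal R) {n m : ℕ} (h : n ≤ m) : Q I m ⟶ Q I n :=
  ModuleCat.ofHom (Submodule.mapQ _ _ LinearMap.id (Ideal.pow_le_pow_right h))

/-- restriction -/
def rs {I : Ideal R} {Y : ModuleCat.{0} R} {i n m : ℕ} (h : n ≤ m) (e : Abelian.Ext (Q I n) Y i) :
    Abelian.Ext (Q I m) Y i := (Abelian.Ext.mk₀ (tr I h)).comp e (zero_add i)

section Colim
variable (I : Ideal R) (i : ℕ) (M : Type) [AddCommGroup M] [Module R M]

abbrev dg : ℕᵒᵖᵒᵖ ⥤ ModuleCat.{0} R :=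
  localCohomology.diagram (localCohomology.idealPowersDiagram I) i ⋙ 
    (evaluation _ _).obj (ModuleCat.of R M)

def cc : Cocone (dg I i M) :=
  have := localCohomology.hasColimitDiagram.{0, 0} (localCohomology.idealPowersDiagram I) i
  ((evaluation _ _).obj (ModuleCat.of R M)).mapCocone 
    (colimit.cocone (localCohomology.diagram (localCohomology.idealPowersDiagram I) i))

def ccIs : IsColimit (cc I i M) :=
  have := localCohomology.hasColimitDiagram.{0, 0} (localCohomology.idealPowersDiagram I) i
  isColimitOfPreserves ((evaluation _ _).obj (ModuleCat.of R M)) 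
    (colimit.isColimit (localCohomology.diagram (localCohomology.idealPowersDiagram I) i))

/-- structure maps -/
def io (n : ℕ) (e : OldExt (Q I n) (ModuleCat.of R M) i) : locH I i M :=
  ((cc I i M).ι.app (Opposite.op (Opposite.op n))).hom e

lemma io_sub (n : ℕ) (e e' : OldExt (Q I n) (ModuleCat.of R M) i) :
    io I i M n (e - e') = io I i M n e - io I i M n e' :=
  map_sub ((cc I i M).ι.app (Opposite.op (Opposite.op n))).hom e e'

lemma io_zero (n : ℕ) : io I i M n 0 = 0 :=
  map_zero ((cc I i M).ι.app (Opposite.op (Opposite.op n))).hom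

lemma io_surj (z : locH I i M) : ∃ n e, io I i M n e = z := by
  obtain ⟨j, y, h⟩ := Concrete.isColimit_exists_rep _ (ccIs I i M) z
  exact ⟨j.unop.unop, y, h⟩

lemma io_map {n m : ℕ} (h : n ≤ m) (e : OldExt (Q I n) (ModuleCat.of R M) i) :
    io I i M m ((((Ext R (ModuleCat.{0} R) i).map (tr I h).op).app (ModuleCat.of R M)).hom e)
      = io I i M n e := by
  have := (cc I i M).w (homOfLE h).op.op
  exact congrArg (fun f => f.hom e) this

lemma io_eq_zero {n : ℕ} (e : OldExt (Q I n) (ModuleCat.of R M) i) (h : io I i M n e = 0) :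
    ∃ m, ∃ h : n ≤ m,
      (((Ext R (ModuleCat.{0} R) i).map (tr I h).op).app (ModuleCat.of R M)).hom e = 0 := by
  have h2 : io I i M n e = io I i M n 0 := by rw [h, io_zero]
  obtain ⟨k, f, g, hk⟩ := Concrete.isColimit_exists_of_rep_eq (dg I i M) (ccIs I i M) 
    (i := Opposite.op (Opposite.op n)) (j := Opposite.op (Opposite.op n)) e 0 h2
  refine ⟨k.unop.unop, leOfHom f.unop.unop, ?_⟩
  have h3 : (dg I i M).map g 0 = 0 := map_zero _
  rw [h3] at hk
  exact hk

lemma io_one (e : OldExt (Q I 1) (ModuleCat.of R M) i) : io I i M 1 e = phi I i M e := rfl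

lemma B1 : Subsingleton (locH I i M) ↔ ∀ (n : ℕ) (e : Abelian.Ext (Q I n) (ModuleCat.of R M) i),
    ∃ m, ∃ h : n ≤ m, rs h e = 0 := by
  constructor
  · intro hs n e
    obtain ⟨e, rfl⟩ := nb_surj e
    obtain ⟨m, h, hm⟩ := io_eq_zero I i M e (Subsingleton.elim _ _)
    refine ⟨m, h, ?_⟩
    unfold rs
    rw [← nb_map, hm, nb_eq_zero]
  · intro H
    refine subsingleton_of_forall_eq 0 fun z => ?_
    obtain ⟨n, e, rfl⟩ := io_surj I i M z
    obtain ⟨m, h, hm⟩ := H n (nb e)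
    unfold rs at hm
    rw [← nb_map, nb_eq_zero] at hm
    rw [← io_map I i M h, hm, io_zero]

lemma B2 : PhiSurj I i M ↔ ∀ (n : ℕ) (e : Abelian.Ext (Q I n) (ModuleCat.of R M) i),
    ∃ e1 : Abelian.Ext (Q I 1) (ModuleCat.of R M) i, 
    ∃ m, ∃ h : n ≤ m, ∃ h1 : 1 ≤ m, rs h e = rs h1 e1 := by
  constructor
  · intro hs n e
    obtain ⟨e, rfl⟩ := nb_surj e
    obtain ⟨e1, he1⟩ : ∃ e1 : OldExt (Q I 1) (ModuleCat.of R M) i, io I i M 1 e1 = io I i M n e :=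
      hs (io I i M n e)
    rw [← io_map I i M (Nat.le_add_left 1 n), ← io_map I i M (Nat.le_add_right n 1), 
      ← sub_eq_zero, ← io_sub] at he1
    obtain ⟨m, h, hm⟩ := io_eq_zero I i M _ he1
    refine ⟨nb e1, m, (Nat.le_add_right n 1).trans h, (Nat.le_add_left 1 n).trans h, ?_⟩
    unfold rs
    rw [← nb_map, ← nb_map, nb_inj]
    have key : ∀ {k : ℕ} (hk : k ≤ n + 1) (e : OldExt (Q I k) (ModuleCat.of R M) i), 
        (((Ext R (ModuleCat.{0} R) i).map (tr I h).op).app (ModuleCat.of R M)).hom 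
        ((((Ext R (ModuleCat.{0} R) i).map (tr I hk).op).app (ModuleCat.of R M)).hom e) =
        (((Ext R (ModuleCat.{0} R) i).map (tr I (hk.trans h)).op).app (ModuleCat.of R M)).hom e := by
      intro k hk e
      have : (homOfLE hk).op.op ≫ (homOfLE h).op.op = (homOfLE (hk.trans h)).op.op := rfl
      have := (dg I i M).map_comp (homOfLE hk).op.op (homOfLE h).op.op
      exact (congrArg (fun f => f.hom e) this).symm
    rw [map_sub, key, key, sub_eq_zero] at hm
    exact hm.symm
  · intro H z
    obtain ⟨n, e, rfl⟩ := io_surj I i M z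
    obtain ⟨e1, m, h, h1, he⟩ := H n (nb e)
    obtain ⟨e1, rfl⟩ := nb_surj e1
    unfold rs at he
    rw [← nb_map, ← nb_map, nb_inj] at he
    refine ⟨e1, ?_⟩
    rw [← io_map I i M h, he, io_map I i M h1]
    rfl

end Colim
end RelB


namespace RelB
open Limits

section Model
variable (I : Ideal R)

/-- `Ext^i(R/I^n, M)` -/
abbrev E (i n : ℕ) (M : Type) [AddCommGroup M] [Module R M] : Type :=
  Abelian.Ext (Q I n) (ModuleCat.of R M) i

variable {M N K : Type} [AddCommGroup M] [Module R M] [AddCommGroup N] [Module R N]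
  [AddCommGroup K] [Module R K]

/-- linear version of `rs` -/
def rsL {i : ℕ} (n m : ℕ) (h : n ≤ m) : E I i n M →ₗ[R] E I i m M :=
  (Abelian.Ext.mk₀ (tr I h)).precompOfLinear R (ModuleCat.of R M) (zero_add i)

lemma rsL_apply {i n m : ℕ} (h : n ≤ m) (e : E I i n M) : rsL I n m h e = rs h e := rfl

lemma tr_refl (n : ℕ) : tr I (le_refl n) = 𝟙 _ := by
  apply ModuleCat.hom_ext
  apply Submodule.linearMap_qext
  ext
  rfl

lemma tr_comp {n m k : ℕ} (h : n ≤ m) (h' : m ≤ k) : tr I h' ≫ tr I h = tr I (h.trans h') := by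
  apply ModuleCat.hom_ext
  apply Submodule.linearMap_qext
  ext
  rfl

instance dsys (i : ℕ) : DirectedSystem (fun n => E I i n M) (fun n m h => rsL I n m h) where
  map_self n e := by
    change (Abelian.Ext.mk₀ (tr I (le_refl n))).comp e (zero_add i) = e
    rw [tr_refl, Abelian.Ext.mk₀_id_comp]
  map_map n m k h h' e := by
    change (Abelian.Ext.mk₀ (tr I h')).comp ((Abelian.Ext.mk₀ (tr I h)).comp e (zero_add i)) (zero_add i) = 
      (Abelian.Ext.mk₀ (tr I _)).comp e (zero_add i)
    rw [← tr_comp I h h', ← Abelian.Ext.mk₀_comp_mk₀_assoc]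

/-- model of local cohomology -/
abbrev H (i : ℕ) (M : Type) [AddCommGroup M] [Module R M] : Type :=
  Module.DirectLimit (fun n => E I i n M) (fun n m h => rsL I n m h)

/-- structure maps -/
def cls (i n : ℕ) : E I i n M →ₗ[R] H I i M :=
  Module.DirectLimit.of R ℕ (fun n => E I i n M) (fun n m h => rsL I n m h) n

lemma cls_rs {i n m : ℕ} (h : n ≤ m) (e : E I i n M) : cls I i m (rs h e) = cls I i n e :=
  Module.DirectLimit.of_f 

lemma cls_surj {i : ℕ} (z : H I i M) : ∃ n e, cls I i n e = z := Module.DirectLimit.exists_of z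

lemma cls_zero {i n : ℕ} {e : E I i n M} (h : cls I i n e = 0) : ∃ m, ∃ h : n ≤ m, rs h e = 0 :=
  Module.DirectLimit.of.zero_exact h

/-- composition -/
def hc {i j k : ℕ} (β : Abelian.Ext (ModuleCat.of R M) (ModuleCat.of R N) j) (h : i + j = k) :
    H I i M →ₗ[R] H I k N :=
  Module.DirectLimit.map (fun n => β.postcompOfLinear R (Q I n) h) (by
    intro n m hnm
    ext e
    change ((Abelian.Ext.mk₀ (tr I hnm)).comp e (zero_add i)).comp β h = 
      (Abelian.Ext.mk₀ (tr I hnm)).comp (e.comp β h) (zero_add k)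
    rw [Abelian.Ext.comp_assoc _ _ _ _ _ (by omega)])

lemma hc_cls {i j k n : ℕ} (β : Abelian.Ext (ModuleCat.of R M) (ModuleCat.of R N) j) (h : i + j = k)
    (e : E I i n M) : hc I β h (cls I i n e) = cls I k n (e.comp β h) :=
  Module.DirectLimit.map_apply_of _ _ _ 

/-- functoriality -/
def hm {i : ℕ} (f : M →ₗ[R] N) : H I i M →ₗ[R] H I i N :=
  hc I (Abelian.Ext.mk₀ (ModuleCat.ofHom f)) (add_zero i)

/-- functoriality for Ext -/
def em {i : ℕ} (f : M →ₗ[R] N) : E I i 1 M →ₗ[R] E I i 1 N :=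
  (Abelian.Ext.mk₀ (ModuleCat.ofHom f)).postcompOfLinear R (Q I 1) (add_zero i)

/-- the natural map -/
abbrev ph (i : ℕ) : E I i 1 M →ₗ[R] H I i M := cls I i 1

lemma ph_em {i : ℕ} (f : M →ₗ[R] N) (e : E I i 1 M) : ph I i (em I f e) = hm I f (ph I i e) :=
  (hc_cls _ _ _ _).symm

lemma em_comp {i : ℕ} (f : M →ₗ[R] N) (g : N →ₗ[R] K) (e : E I i 1 M) :
    em I g (em I f e) = em I (g ∘ₗ f) e := by
  change (e.comp _ (add_zero i)).comp _ (add_zero i) = e.comp _ (add_zero i)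
  rw [Abelian.Ext.comp_assoc_of_third_deg_zero, Abelian.Ext.mk₀_comp_mk₀]
  rfl

lemma hm_comp {i : ℕ} (f : M →ₗ[R] N) (g : N →ₗ[R] K) (z : H I i M) :
    hm I g (hm I f z) = hm I (g ∘ₗ f) z := by
  obtain ⟨n, e, rfl⟩ := cls_surj I z
  unfold hm
  rw [hc_cls, hc_cls, hc_cls, Abelian.Ext.comp_assoc_of_third_deg_zero, Abelian.Ext.mk₀_comp_mk₀]
  rfl

lemma em_smul {i : ℕ} (x : R) (e : E I i 1 M) : em I (LinearMap.lsmul R M x) e = x • e := by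
  rw [Abelian.Ext.smul_eq_comp_mk₀]
  rfl

lemma hm_smul {i : ℕ} (x : R) (z : H I i M) : hm I (LinearMap.lsmul R M x) z = x • z := by
  obtain ⟨n, e, rfl⟩ := cls_surj I z
  unfold hm
  rw [hc_cls, ← map_smul, Abelian.Ext.smul_eq_comp_mk₀]
  rfl

lemma E_smul {i n : ℕ} {x : R} (hx : x ∈ I ^ n) (e : E I i n M) : x • e = 0 := by
  rw [← Abelian.Ext.mk₀_id_comp e, ← Abelian.Ext.smul_comp, ← Abelian.Ext.mk₀_smul]
  have : x • 𝟙 (Q I n) = 0 := by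
    apply ModuleCat.hom_ext
    apply Submodule.linearMap_qext
    ext
    change x • (Submodule.Quotient.mk 1 : R ⧸ I ^ n) = 0
    rw [← Submodule.Quotient.mk_smul, Submodule.Quotient.mk_eq_zero]
    simpa using hx
  rw [this, Abelian.Ext.mk₀_zero, Abelian.Ext.zero_comp]

lemma H_tors {i : ℕ} (z : H I i M) : ∃ n, ∀ x ∈ I ^ n, x • z = 0 := by
  obtain ⟨n, e, rfl⟩ := cls_surj I z
  exact ⟨n, fun x hx => by rw [← map_smul, E_smul I hx, map_zero]⟩

lemma ph_smul {i : ℕ} {x : R} (hx : x ∈ I) (e : E I i 1 M) : x • e = 0 := 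
  E_smul I (by simpa using hx) e

/-! degree zero -/

/-- the element of `H^0` given by a torsion element. -/
def ga (n : ℕ) (m : M) (h : ∀ a ∈ I ^ n, a • m = 0) : H I 0 M :=
  cls I 0 n (Abelian.Ext.mk₀ (ModuleCat.ofHom
    (Submodule.liftQ (I ^ n) (LinearMap.toSpanSingleton R M m) h)))

lemma rs_mk₀ {n k : ℕ} (hk : n ≤ k) (m : M) (h : ∀ a ∈ I ^ n, a • m = 0) 
    (h' : ∀ a ∈ I ^ k, a • m = 0) :
    rs hk (Abelian.Ext.mk₀ (ModuleCat.ofHom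
      (Submodule.liftQ (I ^ n) (LinearMap.toSpanSingleton R M m) h)) : E I 0 n M) = 
      Abelian.Ext.mk₀ (ModuleCat.ofHom
      (Submodule.liftQ (I ^ k) (LinearMap.toSpanSingleton R M m) h')) := by
  unfold rs
  rw [Abelian.Ext.mk₀_comp_mk₀]
  congr 1
  apply ModuleCat.hom_ext
  apply Submodule.linearMap_qext
  ext
  rfl

lemma ga_eq {n k : ℕ} (m : M) (h : ∀ a ∈ I ^ n, a • m = 0) (h' : ∀ a ∈ I ^ k, a • m = 0) :
    ga I n m h = ga I k m h' := by
  unfold ga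
  rw [← cls_rs I (le_max_left n k), ← cls_rs I (le_max_right n k), rs_mk₀ I _ m h, rs_mk₀ I _ m h']
  intro a ha
  exact h a (Ideal.pow_le_pow_right (le_max_left n k) ha)

lemma ga_surj (z : H I 0 M) : ∃ n m h, ga I n m h = z := by
  obtain ⟨n, e, rfl⟩ := cls_surj I z
  obtain ⟨f, rfl⟩ := Abelian.Ext.mk₀_bijective _ _ |>.2 e
  refine ⟨n, f.hom (Submodule.Quotient.mk 1), ?_, ?_⟩
  · intro a ha
    rw [← map_smul, ← Submodule.Quotient.mk_smul, (Submodule.Quotient.mk_eq_zero _).2, map_zero]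
    simpa using ha
  · unfold ga
    congr 2
    apply ModuleCat.hom_ext
    apply Submodule.linearMap_qext
    ext
    change (1:R) • f.hom (Submodule.Quotient.mk 1) = f.hom (Submodule.Quotient.mk 1)
    rw [one_smul]

lemma ga_zero {n : ℕ} {m : M} {h : ∀ a ∈ I ^ n, a • m = 0} (h0 : ga I n m h = 0) : m = 0 := by
  obtain ⟨k, hk, h1⟩ := cls_zero I h0
  rw [rs_mk₀ I hk m h (fun a ha => h a (Ideal.pow_le_pow_right hk ha)), 
    Abelian.Ext.mk₀_eq_zero_iff] at h1
  have := congrArg (fun f => f.hom (Submodule.Quotient.mk 1)) h1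
  change (1:R) • m = 0 at this
  simpa using this

lemma ga_map {n : ℕ} (m : M) (h : ∀ a ∈ I ^ n, a • m = 0) (f : M →ₗ[R] N) 
    (h' : ∀ a ∈ I ^ n, a • f m = 0) : hm I f (ga I n m h) = ga I n (f m) h' := by
  unfold ga hm
  rw [hc_cls, Abelian.Ext.mk₀_comp_mk₀]
  congr 2
  apply ModuleCat.hom_ext
  apply Submodule.linearMap_qext
  ext
  change f ((1:R) • m) = (1:R) • f m
  simp

lemma ga_inj {n k : ℕ} {m m' : M} {h : ∀ a ∈ I ^ n, a • m = 0} {h' : ∀ a ∈ I ^ k, a • m' = 0}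
    (h0 : ga I n m h = ga I k m' h') : m = m' := by
  have hn : ∀ a ∈ I ^ (max n k), a • m = 0 := fun a ha => 
    h a (Ideal.pow_le_pow_right (le_max_left n k) ha)
  have hk : ∀ a ∈ I ^ (max n k), a • m' = 0 := fun a ha => 
    h' a (Ideal.pow_le_pow_right (le_max_right n k) ha)
  rw [ga_eq I m h hn, ga_eq I m' h' hk] at h0
  have hs : ∀ a ∈ I ^ (max n k), a • (m - m') = 0 := fun a ha => by 
    rw [smul_sub, hn a ha, hk a ha, sub_zero]
  rw [← sub_eq_zero]
  apply ga_zero I (n := max n k) (h := hs)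
  have : ga I (max n k) (m - m') hs = ga I _ m hn - ga I _ m' hk := by
    unfold ga
    rw [← map_sub]
    congr 1
    rw [← Abelian.Ext.addEquiv₀_symm_apply, ← Abelian.Ext.addEquiv₀_symm_apply,
      ← Abelian.Ext.addEquiv₀_symm_apply, ← map_sub]
    congr 1
    apply ModuleCat.hom_ext
    apply Submodule.linearMap_qext
    ext
    change (1:R) • (m - m') = (1:R) • m - (1:R) • m'
    simp
  rw [this, h0, sub_self]

lemma ga_ph (m : M) (h : ∀ a ∈ I ^ 1, a • m = 0) : ∃ e, ph I 0 e = ga I 1 m h := ⟨_, rfl⟩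

lemma ph0_surj (h : Function.Surjective (ph I 0 (M := M))) (n : ℕ) (m : M) 
    (hm : ∀ a ∈ I ^ n, a • m = 0) : ∀ a ∈ I, a • m = 0 := by
  obtain ⟨e, he⟩ := h (ga I n m hm)
  obtain ⟨f, rfl⟩ := Abelian.Ext.mk₀_bijective _ _ |>.2 e
  have hm1 : ∀ a ∈ I ^ 1, a • f.hom (Submodule.Quotient.mk 1) = 0 := by
    intro a ha
    rw [← map_smul, ← Submodule.Quotient.mk_smul, (Submodule.Quotient.mk_eq_zero _).2, map_zero]
    simpa using ha
  have : ph I 0 (Abelian.Ext.mk₀ f) = ga I 1 (f.hom (Submodule.Quotient.mk 1)) hm1 := by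
    unfold ga ph
    congr 2
    apply ModuleCat.hom_ext
    apply Submodule.linearMap_qext
    ext
    change f.hom (Submodule.Quotient.mk 1) = (1:R) • f.hom (Submodule.Quotient.mk 1)
    rw [one_smul]
  rw [this] at he
  have h3 := ga_inj I he
  intro a ha
  rw [← h3]
  exact hm1 a (by simpa using ha)

/-! long exact sequence -/

/-- Data of a short exact sequence. -/
structure SES (f : M →ₗ[R] N) (g : N →ₗ[R] K) : Prop where
  inj : Function.Injective f
  ex : Function.Exact f g
  surj : Function.Surjective g

variable {f : M →ₗ[R] N} {g : N →ₗ[R] K} (S : SES f g)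

/-- short complex -/
abbrev SES.sc (S : SES f g) : ShortComplex (ModuleCat.{0} R) := 
  ShortComplex.mk (ModuleCat.ofHom f) (ModuleCat.ofHom g) (by
    rw [← ModuleCat.ofHom_comp, S.ex.linearMap_comp_eq_zero]; rfl)

lemma SES.se (S : SES f g) : S.sc.ShortExact where
  exact := by
    rw [ShortComplex.ShortExact.moduleCat_exact_iff_function_exact]
    exact S.ex
  mono_f := (ModuleCat.mono_iff_injective _).2 S.inj
  epi_g := (ModuleCat.epi_iff_surjective _).2 S.surj

/-- connecting map -/
def SES.de (i : ℕ) : H I i K →ₗ[R] H I (i+1) M := hc I S.se.extClass rfl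

/-- connecting map for Ext -/
def SES.dE (i : ℕ) : E I i 1 K →ₗ[R] E I (i+1) 1 M := 
  S.se.extClass.postcompOfLinear R (Q I 1) rfl

lemma SES.ph_dE {i : ℕ} (e : E I i 1 K) : ph I _ (S.dE I i e) = S.de I i (ph I i e) :=
  (hc_cls _ _ _ _).symm

lemma SES.gf (S : SES f g) {i : ℕ} (z : H I i M) : hm I g (hm I f z) = 0 := by
  rw [hm_comp, S.ex.linearMap_comp_eq_zero]
  obtain ⟨n, e, rfl⟩ := cls_surj I z
  unfold hm
  rw [hc_cls]
  have : ModuleCat.ofHom (0 : M →ₗ[R] K) = 0 := rfl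
  rw [this, Abelian.Ext.mk₀_zero, Abelian.Ext.comp_zero, map_zero]

lemma SES.dg {i : ℕ} (z : H I i N) : S.de I i (hm I g z) = 0 := by
  obtain ⟨n, e, rfl⟩ := cls_surj I z
  unfold hm SES.de
  rw [hc_cls, hc_cls, Abelian.Ext.comp_assoc_of_second_deg_zero]
  have : (Abelian.Ext.mk₀ (ModuleCat.ofHom g)).comp S.se.extClass (zero_add 1) = 0 := 
    S.se.comp_extClass
  rw [this, Abelian.Ext.comp_zero, map_zero]

lemma SES.fd {i : ℕ} (z : H I i K) : hm I f (S.de I i z) = 0 := by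
  obtain ⟨n, e, rfl⟩ := cls_surj I z
  unfold hm SES.de
  rw [hc_cls, hc_cls, Abelian.Ext.comp_assoc_of_third_deg_zero]
  have : S.se.extClass.comp (Abelian.Ext.mk₀ (ModuleCat.ofHom f)) (add_zero 1) = 0 := 
    S.se.extClass_comp
  rw [this, Abelian.Ext.comp_zero, map_zero]

lemma rs_comp {i j k n m : ℕ} (h : n ≤ m) (e : E I i n M) 
    (β : Abelian.Ext (ModuleCat.of R M) (ModuleCat.of R N) j) (hk : i + j = k) :
    (rs h e).comp β hk = rs h (e.comp β hk) := by
  unfold rs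
  rw [Abelian.Ext.comp_assoc _ _ _ _ _ (by omega)]

lemma SES.ex_g (S : SES f g) {i : ℕ} (z : H I i N) (hz : hm I g z = 0) : ∃ w, hm I f w = z := by
  obtain ⟨n, e, rfl⟩ := cls_surj I z
  unfold hm at *
  rw [hc_cls] at hz
  obtain ⟨m, h, hz⟩ := cls_zero I hz
  rw [← rs_comp] at hz
  obtain ⟨w, hw⟩ := Abelian.Ext.covariant_sequence_exact₂ _ S.se (rs h e) hz
  exact ⟨cls I i m w, by rw [hc_cls, ← cls_rs I h, ← hw]⟩

lemma SES.ex_d {i : ℕ} (z : H I i K) (hz : S.de I i z = 0) : ∃ w, hm I g w = z := by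
  obtain ⟨n, e, rfl⟩ := cls_surj I z
  unfold hm SES.de at *
  rw [hc_cls] at hz
  obtain ⟨m, h, hz⟩ := cls_zero I hz
  rw [← rs_comp] at hz
  obtain ⟨w, hw⟩ := Abelian.Ext.covariant_sequence_exact₃ _ S.se (rs h e) rfl hz
  exact ⟨cls I i m w, by rw [hc_cls, ← cls_rs I h, ← hw]⟩

lemma SES.ex_f {i : ℕ} (z : H I (i+1) M) (hz : hm I f z = 0) : ∃ w, S.de I i w = z := by
  obtain ⟨n, e, rfl⟩ := cls_surj I z
  unfold hm SES.de at *
  rw [hc_cls] at hz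
  obtain ⟨m, h, hz⟩ := cls_zero I hz
  rw [← rs_comp] at hz
  obtain ⟨w, hw⟩ := Abelian.Ext.covariant_sequence_exact₁ _ S.se (rs h e) hz rfl
  exact ⟨cls I i m w, by rw [hc_cls, ← cls_rs I h, ← hw]⟩

lemma SES.Eex_f {i : ℕ} (e : E I (i+1) 1 M) (he : em I f e = 0) : ∃ w, S.dE I i w = e := 
  Abelian.Ext.covariant_sequence_exact₁ _ S.se e he rfl

/-! translation -/

lemma locH_sub_iff (i : ℕ) (M : Type) [AddCommGroup M] [Module R M] : 
    Subsingleton (locH I i M) ↔ Subsingleton (H I i M) := by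
  rw [B1]
  constructor
  · intro h
    refine subsingleton_of_forall_eq 0 fun z => ?_
    obtain ⟨n, e, rfl⟩ := cls_surj I z
    obtain ⟨m, hm, h⟩ := h n e
    rw [← cls_rs I hm, h, map_zero]
  · intro h n e
    exact cls_zero I (Subsingleton.elim _ _)

lemma phiSurj_iff (i : ℕ) (M : Type) [AddCommGroup M] [Module R M] : 
    PhiSurj I i M ↔ Function.Surjective (ph I i (M := M)) := by
  rw [B2]
  constructor
  · intro h z
    obtain ⟨n, e, rfl⟩ := cls_surj I z
    obtain ⟨e1, m, h, h1, he⟩ := h n e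
    exact ⟨e1, by rw [← cls_rs I h, he, cls_rs I h1]⟩
  · intro h n e
    obtain ⟨e1, he1⟩ := h (cls I i n e)
    rw [← cls_rs I (Nat.le_add_left 1 n), ← cls_rs I (Nat.le_add_right n 1), 
      ← sub_eq_zero, ← map_sub] at he1
    obtain ⟨m, hm, h0⟩ := cls_zero I he1
    refine ⟨e1, m, (Nat.le_add_right n 1).trans hm, (Nat.le_add_left 1 n).trans hm, ?_⟩
    have key := (dsys I i (M := M)).map_map (Nat.le_add_left 1 n) hm e1
    have key2 := (dsys I i (M := M)).map_map (Nat.le_add_right n 1) hm e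
    rw [← rsL_apply, map_sub, sub_eq_zero] at h0
    exact (key2.symm.trans (h0.symm.trans key))

end Model
end RelB


namespace RelB
open Limits

section Tors

lemma ses_mkQ {M : Type} [AddCommGroup M] [Module R M] (P : Submodule R M) : 
    SES P.subtype P.mkQ where
  inj := P.injective_subtype
  ex := by rw [LinearMap.exact_iff]; simp
  surj := P.mkQ_surjective

lemma ses_ker {M N : Type} [AddCommGroup M] [Module R M] [AddCommGroup N] [Module R N] 
    (g : M →ₗ[R] N) (hg : Function.Surjective g) : SES (LinearMap.ker g).subtype g where
  inj := Submodule.injective_subtype _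
  ex := by rw [LinearMap.exact_iff]; simp
  surj := hg

variable {A₁ B₁ C₁ A₂ B₂ C₂ N : Type} [AddCommGroup A₁] [Module R A₁] [AddCommGroup B₁] [Module R B₁]
  [AddCommGroup C₁] [Module R C₁] [AddCommGroup A₂] [Module R A₂] [AddCommGroup B₂] [Module R B₂]
  [AddCommGroup C₂] [Module R C₂] [AddCommGroup N] [Module R N]

lemma pullzero {f₁ : A₁ →ₗ[R] B₁} {g₁ : B₁ →ₗ[R] C₁} {f₂ : A₂ →ₗ[R] B₂} {g₂ : B₂ →ₗ[R] C₂} 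
    (S₁ : SES f₁ g₁) (S₂ : SES f₂ g₂) (a : A₁ →ₗ[R] A₂) (b : B₁ →ₗ[R] B₂) (c : C₁ →ₗ[R] C₂)
    (hf : f₂ ∘ₗ a = b ∘ₗ f₁) (hg : g₂ ∘ₗ b = c ∘ₗ g₁) (P : Submodule R A₂) (hP : ∀ x, a x ∈ P)
    {j k : ℕ} (e : Abelian.Ext (ModuleCat.of R A₂) (ModuleCat.of R N) j) 
    (he : (Abelian.Ext.mk₀ (ModuleCat.ofHom P.subtype)).comp e (zero_add j) = 0) (h : 1 + j = k) :
    (Abelian.Ext.mk₀ (ModuleCat.ofHom c)).comp (S₂.se.extClass.comp e h) (zero_add k) = 0 := by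
  let α : S₁.sc ⟶ S₂.sc := 
    { τ₁ := ModuleCat.ofHom a
      τ₂ := ModuleCat.ofHom b
      τ₃ := ModuleCat.ofHom c
      comm₁₂ := by
        change ModuleCat.ofHom a ≫ ModuleCat.ofHom f₂ = ModuleCat.ofHom f₁ ≫ ModuleCat.ofHom b
        rw [← ModuleCat.ofHom_comp, hf]; rfl
      comm₂₃ := by
        change ModuleCat.ofHom b ≫ ModuleCat.ofHom g₂ = ModuleCat.ofHom g₁ ≫ ModuleCat.ofHom c
        rw [← ModuleCat.ofHom_comp, hg]; rfl }
  have h1 : S₁.se.extClass.comp (Abelian.Ext.mk₀ (ModuleCat.ofHom a)) (add_zero 1) =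
      (Abelian.Ext.mk₀ (ModuleCat.ofHom c)).comp S₂.se.extClass (zero_add 1) := 
    ShortComplex.ShortExact.extClass_naturality S₁.se S₂.se α
  have h2 : ModuleCat.ofHom a = ModuleCat.ofHom (a.codRestrict P hP) ≫ ModuleCat.ofHom P.subtype := by
    rw [← ModuleCat.ofHom_comp]; rfl
  rw [← Abelian.Ext.comp_assoc _ _ _ (zero_add 1) h (by omega), ← h1, 
    Abelian.Ext.comp_assoc _ _ _ (add_zero 1) (zero_add j) (by omega), h2,
    ← Abelian.Ext.mk₀_comp_mk₀_assoc, he, Abelian.Ext.comp_zero, Abelian.Ext.comp_zero]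

variable [IsNoetherianRing R] (I : Ideal R)

lemma lemmaK {k : ℕ} (hN : ∀ a ∈ I ^ k, ∀ n : N, a • n = 0) (i : ℕ) : 
    ∀ (X : Type) [AddCommGroup X] [Module R X] [Module.Finite R X] 
    (e : Abelian.Ext (ModuleCat.of R X) (ModuleCat.of R N) i), 
    ∃ m, (Abelian.Ext.mk₀ (ModuleCat.ofHom (I ^ m • (⊤ : Submodule R X)).subtype)).comp e 
      (zero_add i) = 0 := by
  induction i with
  | zero => 
    intro X _ _ _ e
    obtain ⟨f, rfl⟩ := Abelian.Ext.mk₀_bijective _ _ |>.2 e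
    refine ⟨k, ?_⟩
    rw [Abelian.Ext.mk₀_comp_mk₀, Abelian.Ext.mk₀_eq_zero_iff]
    apply ModuleCat.hom_ext
    ext ⟨x, hx⟩
    change f.hom x = 0
    have : I ^ k • (⊤ : Submodule R X) ≤ LinearMap.ker f.hom := by
      rw [Submodule.smul_le]
      intro a ha x _
      rw [LinearMap.mem_ker, map_smul]
      exact hN a ha _
    exact this hx
  | succ i ih =>
    intro X _ _ _ e
    obtain ⟨n, g, hg⟩ := Module.Finite.exists_fin' R X
    let S₂ := ses_ker g hg
    have h0 : (Abelian.Ext.mk₀ S₂.sc.g).comp e (zero_add (i+1)) = 0 := 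
      Abelian.Ext.eq_zero_of_projective (P := ModuleCat.of R (Fin n → R)) _
    obtain ⟨e', rfl⟩ := Abelian.Ext.contravariant_sequence_exact₃ S₂.se _ e h0 (add_comm 1 i)
    obtain ⟨m, hm⟩ := ih (LinearMap.ker g) e'
    obtain ⟨p, hp⟩ := Ideal.exists_pow_inf_eq_pow_smul I (LinearMap.ker g)
    refine ⟨p + m, ?_⟩
    have hr : ∀ y ∈ I ^ (p + m) • (⊤ : Submodule R (Fin n → R)), 
        g y ∈ I ^ (p + m) • (⊤ : Submodule R X) := by
      intro y hy
      have := Submodule.mem_map_of_mem (f := g) hy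
      rw [Submodule.map_smul''] at this
      exact Submodule.smul_mono le_rfl le_top this
    let b := (I ^ (p + m) • (⊤ : Submodule R (Fin n → R))).subtype
    let g₁ := g.restrict hr
    have hg₁ : Function.Surjective g₁ := by
      rintro ⟨x, hx⟩
      have h2 : Submodule.map g (I ^ (p + m) • (⊤ : Submodule R (Fin n → R))) = 
          I ^ (p + m) • (⊤ : Submodule R X) := by
        rw [Submodule.map_smul'', Submodule.map_top, LinearMap.range_eq_top.2 hg]
      rw [← h2] at hx
      obtain ⟨y, hy, rfl⟩ := hx
      exact ⟨⟨y, hy⟩, rfl⟩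
    let a : LinearMap.ker g₁ →ₗ[R] LinearMap.ker g := 
      (b ∘ₗ (LinearMap.ker g₁).subtype).codRestrict _ (by
        rintro ⟨y, hy⟩
        exact congrArg Subtype.val hy)
    refine pullzero (ses_ker g₁ hg₁) S₂ a b _ rfl rfl 
      (I ^ m • (⊤ : Submodule R (LinearMap.ker g))) ?_ e' hm _
    rintro ⟨⟨y, hy⟩, hy2⟩
    have hy3 : y ∈ LinearMap.ker g := congrArg Subtype.val hy2
    have h4 := hp (p + m) (Nat.le_add_right _ _)
    have h5 : y ∈ I ^ (p+m-p) • (I ^ p • ⊤ ⊓ LinearMap.ker g) := h4 ▸ ⟨hy, hy3⟩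
    rw [Nat.add_sub_cancel_left] at h5
    have h6 : y ∈ I ^ m • LinearMap.ker g := Submodule.smul_mono le_rfl inf_le_right h5
    have h7 : Submodule.map (LinearMap.ker g).subtype (I ^ m • (⊤ : Submodule R (LinearMap.ker g))) = 
        I ^ m • LinearMap.ker g := by
      rw [Submodule.map_smul'', Submodule.map_top, Submodule.range_subtype]
    rw [← h7] at h6
    obtain ⟨w, hw, hw2⟩ := h6
    have : w = a ⟨⟨y, hy⟩, hy2⟩ := Subtype.ext hw2
    rw [← this]
    exact hw

lemma H_tors_zero {k : ℕ} (hN : ∀ a ∈ I ^ k, ∀ n : N, a • n = 0) (i : ℕ) (z : H I (i+1) N) :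
    z = 0 := by
  obtain ⟨n, e, rfl⟩ := cls_surj I z
  let S₂ := ses_mkQ (I ^ n)
  have h0 : (Abelian.Ext.mk₀ S₂.sc.g).comp e (zero_add (i+1)) = 0 := 
      Abelian.Ext.eq_zero_of_projective (P := ModuleCat.of R R) _
  obtain ⟨e', rfl⟩ := Abelian.Ext.contravariant_sequence_exact₃ S₂.se _ e h0 (add_comm 1 i)
  obtain ⟨m, hm⟩ := lemmaK I hN i (I ^ n : Ideal R) e'
  rw [← cls_rs I (Nat.le_add_right n m)]
  have := pullzero (ses_mkQ (I ^ (n + m))) S₂ 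
    (Submodule.inclusion (Ideal.pow_le_pow_right (Nat.le_add_right n m))) LinearMap.id
    (Submodule.mapQ _ _ LinearMap.id (Ideal.pow_le_pow_right (Nat.le_add_right n m))) rfl rfl
    (I ^ m • (⊤ : Submodule R (I ^ n : Ideal R))) ?_ e' hm (add_comm 1 i)
  · exact (congrArg (cls I (i+1) (n+m)) this).trans (map_zero _)
  · rintro ⟨y, hy⟩
    have h7 : Submodule.map (I ^ n : Ideal R).subtype 
      (I ^ m • (⊤ : Submodule R (I ^ n : Ideal R))) = I ^ (n + m) := by
      rw [Submodule.map_smul'', Submodule.map_top, Submodule.range_subtype, pow_add, mul_comm]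
      rfl
    have hy' := hy
    rw [← h7] at hy'
    obtain ⟨w, hw, hw2⟩ := hy'
    have hw3 : w = Submodule.inclusion (Ideal.pow_le_pow_right (Nat.le_add_right n m)) ⟨y, hy⟩ :=
      Subtype.ext hw2
    rw [← hw3]
    exact hw

end Tors
end RelB


namespace RelB

section Weak

/-- The submodule `xM`. -/
abbrev xM (M : Type) [AddCommGroup M] [Module R M] (x : R) : Submodule R M :=
  LinearMap.range (LinearMap.lsmul R M x)

lemma mem_xM {M : Type} [AddCommGroup M] [Module R M] (x : R) (m : M) :
    m ∈ xM M x ↔ ∃ n : M, x • n = m := by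
  simp [xM]

lemma span_single_smul_top {M : Type} [AddCommGroup M] [Module R M] (x : R) :
    Ideal.span {x} • (⊤ : Submodule R M) = xM M x := by
  ext m
  rw [Submodule.ideal_span_singleton_smul, mem_xM]
  simp [Submodule.mem_smul_pointwise_iff_exists]

lemma pSpan_zero {M : Type} [AddCommGroup M] [Module R M] {c : ℕ} (x : Fin (c + 1) → R) :
    pSpan M x 0 = ⊥ := by
  have h : x '' {j | j < 0} = ∅ := by
    simp
  rw [pSpan, h]
  simp

lemma pSpan_succ {M : Type} [AddCommGroup M] [Module R M] {c : ℕ} (x : Fin (c + 1) → R)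
    (j : Fin c) (m : M) :
    (xM M (x 0)).mkQ m ∈ pSpan (M ⧸ xM M (x 0)) (fun i => x i.succ) j ↔
      m ∈ pSpan M x j.succ := by
  have h1 : x '' {i | i < j.succ} =
      insert (x 0) ((fun i : Fin c => x i.succ) '' {i | i < j}) := by
    ext a
    simp only [Set.mem_image, Set.mem_ofPred_eq, Set.mem_insert_iff]
    constructor
    · rintro ⟨i, hi, rfl⟩
      induction i using Fin.cases with
      | zero => exact Or.inl rfl
      | succ i => exact Or.inr ⟨i, Fin.succ_lt_succ_iff.1 hi, rfl⟩
    · rintro (rfl | ⟨i, hi, rfl⟩)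
      · exact ⟨0, Fin.succ_pos j, rfl⟩
      · exact ⟨i.succ, Fin.succ_lt_succ_iff.2 hi, rfl⟩
  have h2 : pSpan M x j.succ = xM M (x 0) ⊔
      Ideal.span ((fun i : Fin c => x i.succ) '' {i | i < j}) • (⊤ : Submodule R M) := by
    rw [pSpan, h1, Ideal.span_insert, Submodule.sup_smul, span_single_smul_top]
  have h3 : pSpan (M ⧸ xM M (x 0)) (fun i => x i.succ) j =
      Submodule.map (xM M (x 0)).mkQ
        (Ideal.span ((fun i : Fin c => x i.succ) '' {i | i < j}) • (⊤ : Submodule R M)) := by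
    rw [pSpan, Submodule.map_smul'', Submodule.map_top, Submodule.range_mkQ]
  rw [h3, ← Submodule.mem_comap, Submodule.comap_map_mkQ, h2]

lemma weak_succ (I : Ideal R) {M : Type} [AddCommGroup M] [Module R M] {c : ℕ}
    (x : Fin (c + 1) → R) :
    IsWeakSeq I M x ↔ (∀ m : M, x 0 • m = 0 → ∀ a ∈ I, a • m = 0) ∧
      IsWeakSeq I (M ⧸ xM M (x 0)) (fun j => x j.succ) := by
  constructor
  · intro h
    refine ⟨fun m hm a ha => ?_, fun j m hm a ha => ?_⟩
    · have := h 0 m (by rw [hm]; exact Submodule.zero_mem _) a ha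
      rwa [pSpan_zero, Submodule.mem_bot] at this
    · obtain ⟨m, rfl⟩ := (xM M (x 0)).mkQ_surjective m
      rw [← map_smul, pSpan_succ] at hm ⊢
      exact h j.succ m hm a ha
  · rintro ⟨h0, h⟩ i m hm a ha
    induction i using Fin.cases with
    | zero =>
      rw [pSpan_zero, Submodule.mem_bot] at hm ⊢
      exact h0 m hm a ha
    | succ j =>
      have := h j ((xM M (x 0)).mkQ m)
      simp only [← map_smul, pSpan_succ] at this
      exact this hm a ha

/-- multiplication by a nonzerodivisor. -/
lemma ses_reg {M : Type} [AddCommGroup M] [Module R M] (x : R)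
    (h : ∀ m : M, x • m = 0 → m = 0) :
    SES (LinearMap.lsmul R M x) (xM M x).mkQ where
  inj := by
    rw [← LinearMap.ker_eq_bot, LinearMap.ker_eq_bot']
    exact h
  ex := by rw [LinearMap.exact_iff]; simp [xM]
  surj := Submodule.mkQ_surjective _

theorem lemS [IsNoetherianRing R] (I : Ideal R) {M : Type} [AddCommGroup M] [Module R M]
    (x : R) (hx : x ∈ I) (h : ∀ m : M, x • m = 0 → ∀ a ∈ I, a • m = 0) (i : ℕ)
    (h0 : Function.Surjective (ph I i (M := M)))
    (h1 : Function.Surjective (ph I (i + 1) (M := M))) :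
    Function.Surjective (ph I i (M := M ⧸ xM M x)) := by
  intro z
  let Γ := LinearMap.ker (LinearMap.lsmul R M x)
  let μ : (M ⧸ Γ) →ₗ[R] M := Γ.liftQ (LinearMap.lsmul R M x) le_rfl
  have hμ : μ ∘ₗ Γ.mkQ = LinearMap.lsmul R M x := Γ.liftQ_mkQ _ _
  have S1 : SES Γ.subtype Γ.mkQ := ses_mkQ Γ
  have S2 : SES μ (xM M x).mkQ :=
    { inj := by
        rw [← LinearMap.ker_eq_bot]
        exact Submodule.ker_liftQ_eq_bot _ _ _ le_rfl
      ex := by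
        rw [LinearMap.exact_iff, Submodule.ker_mkQ]
        exact (Submodule.range_liftQ _ _ _).symm
      surj := Submodule.mkQ_surjective _ }
  have hΓ : ∀ a ∈ I ^ 1, ∀ n : Γ, a • n = 0 := by
    rintro a ha ⟨n, hn⟩
    rw [pow_one] at ha
    exact Subtype.ext (h n hn a ha)
  obtain ⟨u, hu⟩ := S1.ex_d I (S2.de I i z) (H_tors_zero I hΓ _ _)
  obtain ⟨e, rfl⟩ := h1 u
  have he : em I μ (em I Γ.mkQ e) = 0 := by
    rw [em_comp, hμ, em_smul]
    exact ph_smul I hx e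
  obtain ⟨f, hf⟩ := S2.Eex_f I _ he
  have hd : S2.de I i (z - ph I i f) = 0 := by
    rw [map_sub, ← S2.ph_dE, hf, ph_em, hu, sub_self]
  obtain ⟨w, hw⟩ := S2.ex_d I _ hd
  obtain ⟨e', rfl⟩ := h0 w
  refine ⟨em I (xM M x).mkQ e' + f, ?_⟩
  rw [map_add, ph_em, hw]
  simp

end Weak

section Avoid

lemma coset_avoid (s : Set (Ideal R)) (hs : s.Finite) (hp : ∀ P ∈ s, P.IsPrime) (w : R)
    (B : Ideal R) (h : ∀ P ∈ s, w ∈ P → ¬ B ≤ P) : ∃ b ∈ B, ∀ P ∈ s, w + b ∉ P := by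
  classical
  obtain ⟨t, ht⟩ : ∃ t : Finset (Ideal R), ∀ P, P ∈ t ↔ Maximal (· ∈ s) P :=
    ⟨hs.toFinset.filter (fun P => Maximal (· ∈ s) P), fun P => by
      rw [Finset.mem_filter, Set.Finite.mem_toFinset]
      exact ⟨fun h => h.2, fun h => ⟨h.1, h⟩⟩⟩
  have hts : ∀ P ∈ t, P ∈ s := fun P hP => ((ht P).1 hP).1
  obtain ⟨s1, m1⟩ : ∃ s1 : Finset (Ideal R), ∀ P, P ∈ s1 ↔ P ∈ t ∧ w ∈ P :=
    ⟨t.filter (fun P => w ∈ P), fun P => Finset.mem_filter⟩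
  obtain ⟨s2, m2⟩ : ∃ s2 : Finset (Ideal R), ∀ P, P ∈ s2 ↔ P ∈ t ∧ w ∉ P :=
    ⟨t.filter (fun P => w ∉ P), fun P => Finset.mem_filter⟩
  obtain ⟨C, hCdef⟩ : ∃ C : Ideal R, C = B * ∏ P ∈ s2, P := ⟨_, rfl⟩
  have hCB : C ≤ B := hCdef ▸ Ideal.mul_le_left
  have hCp : C ≤ ∏ P ∈ s2, P := hCdef ▸ Ideal.mul_le_right
  have hC : ¬ ((C : Set R) ⊆ ⋃ P ∈ (s1 : Set (Ideal R)), (P : Set R)) := by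
    intro hsub
    rw [Ideal.subset_union_prime (f := fun P => P) ⊥ ⊥
      (fun P hP _ _ => hp P (hts P ((m1 P).1 hP).1))] at hsub
    obtain ⟨P, hP, hCP⟩ := hsub
    obtain ⟨hPt, hwP⟩ := (m1 P).1 hP
    have hPp := hp P (hts P hPt)
    rcases hPp.mul_le.1 (hCdef ▸ hCP) with h' | h'
    · exact h P (hts P hPt) hwP h'
    · obtain ⟨Q, hQ, hQP⟩ := (Ideal.IsPrime.prod_le hPp).1 h'
      obtain ⟨hQt, hwQ⟩ := (m2 Q).1 hQ
      exact hwQ (((ht Q).1 hQt).2 (hts P hPt) hQP hwP)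
  rw [Set.not_subset] at hC
  obtain ⟨b, hbC, hb⟩ := hC
  refine ⟨b, hCB hbC, fun P hP hwb => ?_⟩
  obtain ⟨Q, hPQ, hQ⟩ := hs.exists_le_maximal hP
  have hwb' := hPQ hwb
  by_cases hw : w ∈ Q
  · apply hb
    simp only [Set.mem_iUnion]
    exact ⟨Q, (m1 Q).2 ⟨(ht Q).2 hQ, hw⟩, (Ideal.add_mem_iff_right Q hw).1 hwb'⟩
  · apply hw
    have hbQ : b ∈ Q := by
      have : C ≤ Q := hCp.trans
        ((Ideal.IsPrime.prod_le (hp Q hQ.1)).2 ⟨Q, (m2 Q).2 ⟨(ht Q).2 hQ, hw⟩, le_rfl⟩)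
      exact this hbC
    exact (Ideal.add_mem_iff_left Q hbQ).1 hwb'

/-- Regular elements in a coset. -/
lemma coset_reg [IsNoetherianRing R] (I : Ideal R) {M : Type} [AddCommGroup M] [Module R M]
    [Module.Finite R M] (hI : ∀ m : M, (∀ a ∈ I, a • m = 0) → m = 0) (w : R) (B : Ideal R)
    (h : ∀ P : Ideal R, P.IsPrime → w ∈ P → B ≤ P → I ≤ P) :
    ∃ b ∈ B, ∀ m : M, (w + b) • m = 0 → m = 0 := by
  obtain ⟨b, hb, hb'⟩ := coset_avoid (associatedPrimes R M) (associatedPrimes.finite R M)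
    (fun P hP => hP.1) w B (by
      intro P hP hw hB
      rw [AssociatedPrimes.mem_iff, isAssociatedPrime_iff] at hP
      obtain ⟨hPp, x, hx⟩ := hP
      have hIP := h P hPp hw hB
      have hx0 : x = 0 := hI x (fun a ha => by
        have := hIP ha
        rw [hx] at this
        simpa [Submodule.mem_colon_singleton] using this)
      apply hPp.ne_top
      rw [hx, hx0, Ideal.eq_top_iff_one]
      simp [Submodule.mem_colon_singleton])
  refine ⟨b, hb, fun m hm => ?_⟩
  by_contra hne
  have : w + b ∈ ⋃ p ∈ associatedPrimes R M, (p : Set R) := by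
    rw [biUnion_associatedPrimes_eq_zero_divisors]
    exact ⟨m, hne, hm⟩
  simp only [Set.mem_iUnion] at this
  obtain ⟨P, hP, hPm⟩ := this
  exact hb' P hP hPm

end Avoid
end RelB


namespace RelB

section LemG

/-- Elements killed by `I ^ n`. -/
def Gam (I : Ideal R) (M : Type) [AddCommGroup M] [Module R M] (n : ℕ) : Submodule R M where
  carrier := {m | ∀ a ∈ I ^ n, a • m = 0}
  add_mem' := by
    intro p q hp hq a ha
    rw [smul_add, hp a ha, hq a ha, add_zero]
  zero_mem' := fun a _ => smul_zero a
  smul_mem' := by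
    intro r p hp a ha
    rw [smul_comm, hp a ha, smul_zero]

lemma mem_Gam (I : Ideal R) {M : Type} [AddCommGroup M] [Module R M] (n : ℕ) (m : M) :
    m ∈ Gam I M n ↔ ∀ a ∈ I ^ n, a • m = 0 := Iff.rfl

lemma Gam_mono (I : Ideal R) (M : Type) [AddCommGroup M] [Module R M] :
    Monotone (Gam I M) := fun _ _ h _ hm a ha => hm a (Ideal.pow_le_pow_right h ha)

lemma kill_mul {N : Type} [AddCommGroup N] [Module R N] (A B : Ideal R) (h : N)
    (hk : ∀ a ∈ A, ∀ b ∈ B, a • b • h = 0) : ∀ a ∈ A * B, a • h = 0 := by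
  intro a ha
  have : A * B ≤ LinearMap.ker (LinearMap.toSpanSingleton R N h) := by
    rw [Ideal.mul_le]
    intro r hr s hs
    simp only [LinearMap.mem_ker, LinearMap.toSpanSingleton_apply, mul_smul]
    exact hk r hr s hs
  simpa using this ha

lemma Gam_stab [IsNoetherianRing R] (I : Ideal R) (M : Type) [AddCommGroup M] [Module R M]
    [Module.Finite R M] :
    ∃ n, ∀ k, ∀ m : M, (∀ a ∈ I ^ k, a • (Gam I M n).mkQ m = 0) → m ∈ Gam I M n := by
  obtain ⟨n, hn⟩ := monotone_stabilizes_iff_noetherian.mpr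
    (inferInstance : IsNoetherian R M) ⟨Gam I M, Gam_mono I M⟩
  refine ⟨n, fun k m hm => ?_⟩
  have h1 : m ∈ Gam I M (n + k) := by
    rw [mem_Gam, pow_add]
    apply kill_mul
    intro a ha b hb
    have h2 := hm b hb
    rw [← map_smul, Submodule.mkQ_apply, Submodule.Quotient.mk_eq_zero] at h2
    exact h2 a ha
  have h3 : Gam I M n = Gam I M (n + k) := hn (n + k) (Nat.le_add_right _ _)
  rw [h3]
  exact h1

lemma reg_pow {M : Type} [AddCommGroup M] [Module R M] (y : R)
    (h : ∀ m : M, y • m = 0 → m = 0) (k : ℕ) : ∀ m : M, y ^ k • m = 0 → m = 0 := by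
  induction k with
  | zero => intro m hm; simpa using hm
  | succ k ih =>
    intro m hm
    rw [pow_succ, mul_smul] at hm
    exact h m (ih _ hm)

/-- Statement of Lemma G at level `s`. -/
def GStat (I : Ideal R) (s : ℕ) : Prop :=
    ∀ (M : Type) [AddCommGroup M] [Module R M] [Module.Finite R M] (m : M) (J : Ideal R)
      (_ : ∀ a ∈ J, a • m = 0) (z : Fin s → R) (_ : ∀ j, z j ∈ I)
      (_ : I ≤ (J ⊔ Ideal.span (Set.range z)).radical) (t : ℕ)
      (_ : ∀ i ≤ s, ∀ a ∈ I ^ t, ∀ h : H I i M, a • h = 0),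
      ∃ n, ∀ a ∈ I ^ n, a • m = 0

lemma lemG_core [IsNoetherianRing R] (I : Ideal R) (hjac : I ≤ (⊥ : Ideal R).jacobson) (s : ℕ)
    (ih : GStat I s) (N : Type) [AddCommGroup N] [Module R N] [Module.Finite R N] (q : N)
    (J : Ideal R) (hJ : ∀ a ∈ J, a • q = 0) (z : Fin (s + 1) → R) (hz : ∀ j, z j ∈ I)
    (hI : I ≤ (J ⊔ Ideal.span (Set.range z)).radical) (t : ℕ)
    (hN : ∀ i ≤ s + 1, ∀ a ∈ I ^ t, ∀ h : H I i N, a • h = 0)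
    (hN0 : ∀ h : H I 0 N, h = 0)
    (hG : ∀ k, ∀ q : N, (∀ a ∈ I ^ k, a • q = 0) → q = 0) : q = 0 := by
  have hrange : Set.range z = insert (z 0) (Set.range (fun j : Fin s => z j.succ)) := by
    ext a
    simp [Fin.exists_fin_succ, eq_comm]
  obtain ⟨T, hT⟩ : ∃ T : Ideal R, T = Ideal.span (Set.range (fun j : Fin s => z j.succ)) :=
    ⟨_, rfl⟩
  have hTI : T ≤ I := by
    rw [hT, Ideal.span_le]
    rintro _ ⟨j, rfl⟩
    exact hz _
  have hspan : Ideal.span (Set.range z) = Ideal.span {z 0} ⊔ T := by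
    rw [hrange, Ideal.span_insert, hT]
  obtain ⟨b, hb, hreg⟩ := coset_reg I (M := N) (fun m h => hG 1 m (by simpa using h)) (z 0)
    ((J ⊓ I) ⊔ T) (by
      intro P hP hw hB
      have hT' : T ≤ P := le_sup_right.trans hB
      rcases (Ideal.IsPrime.inf_le hP).1 (le_sup_left.trans hB) with h | h
      · refine hI.trans ?_
        rw [hP.isRadical.radical_le_iff, hspan]
        refine sup_le h (sup_le ?_ hT')
        rw [Ideal.span_le]
        simpa using hw
      · exact h)
  obtain ⟨y, hy⟩ : ∃ y, y = z 0 + b := ⟨_, rfl⟩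
  rw [← hy] at hreg
  have hyI : y ∈ I := by
    rw [hy]
    exact I.add_mem (hz 0) (sup_le inf_le_right hTI hb)
  have hbJ : b ∈ J ⊔ T := (sup_le_sup_right inf_le_left T) hb
  have key : ∀ k : ℕ, y ^ t • q ∈ xM N (y ^ k) := by
    intro k
    have S := ses_reg (M := N) (y ^ k) (reg_pow y hreg k)
    have hkill : ∀ i ≤ s, ∀ a ∈ I ^ (t + t), ∀ h : H I i (N ⧸ xM N (y ^ k)), a • h = 0 := by
      intro i hi a ha h
      rw [pow_add] at ha
      refine kill_mul _ _ h ?_ a ha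
      intro a ha b hb
      obtain ⟨w, hw⟩ := S.ex_d I (b • h) (by
        rw [map_smul]; exact hN (i + 1) (by omega) b hb _)
      rw [← hw, ← map_smul, hN i (by omega) a ha w, map_zero]
    obtain ⟨n, hn⟩ := ih (N ⧸ xM N (y ^ k)) ((xM N (y ^ k)).mkQ q) (J ⊔ Ideal.span {y ^ k})
      (by
        intro a ha
        rw [← map_smul, Submodule.mkQ_apply, Submodule.Quotient.mk_eq_zero]
        obtain ⟨u, hu, v, hv, rfl⟩ := Submodule.mem_sup.1 ha
        obtain ⟨v, rfl⟩ := Ideal.mem_span_singleton'.1 hv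
        rw [add_smul, hJ u hu, zero_add, mem_xM]
        exact ⟨v • q, by rw [smul_smul, mul_comm]⟩)
      (fun j => z j.succ) (fun j => hz _)
      (by
        rw [← hT]
        refine hI.trans ?_
        rw [(Ideal.radical_isRadical _).radical_le_iff, hspan]
        have hl : ∀ u ∈ J ⊔ T, u ∈ (J ⊔ Ideal.span {y ^ k} ⊔ T).radical := fun u hu =>
          Ideal.le_radical ((sup_le_sup_right le_sup_left T) hu)
        refine sup_le (fun u hu => hl u (le_sup_left (a := J) hu)) (sup_le ?_ (fun u hu => hl u
          (le_sup_right (b := T) hu)))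
        rw [Ideal.span_le, Set.singleton_subset_iff]
        have : z 0 = y - b := by rw [hy]; ring
        rw [this]
        refine Ideal.sub_mem _ ?_ (hl b hbJ)
        refine ⟨k, ?_⟩
        exact le_sup_left (α := Ideal R) (le_sup_right (α := Ideal R)
          (Ideal.mem_span_singleton_self _)))
      (t + t) hkill
    have hg : ∀ a ∈ I ^ t, a • ga I n _ hn = 0 := by
      intro a ha
      have h0 : S.de I 0 (a • ga I n _ hn) = 0 := by
        rw [map_smul]
        exact hN 1 (by omega) a ha _
      obtain ⟨w, hw⟩ := S.ex_d I _ h0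
      rw [← hw, hN0 w, map_zero]
    have h1 := hg (y ^ t) (Ideal.pow_mem_pow hyI t)
    rw [← hm_smul, ga_map I _ hn (LinearMap.lsmul R _ (y ^ t))
      (fun a ha => by rw [← map_smul, hn a ha, map_zero])] at h1
    have h2 := ga_zero I h1
    rw [LinearMap.lsmul_apply, ← map_smul, Submodule.mkQ_apply,
      Submodule.Quotient.mk_eq_zero] at h2
    exact h2
  have hinf : y ^ t • q ∈ (⨅ k : ℕ, I ^ k • ⊤ : Submodule R N) := by
    rw [Submodule.mem_iInf]
    intro k
    obtain ⟨p, hp⟩ := (mem_xM _ _).1 (key k)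
    rw [← hp]
    exact Submodule.smul_mem_smul (Ideal.pow_mem_pow hyI k) trivial
  rw [Ideal.iInf_pow_smul_eq_bot_of_le_jacobson I hjac, Submodule.mem_bot] at hinf
  exact reg_pow y hreg t q hinf

theorem lemG [IsNoetherianRing R] (I : Ideal R) (hjac : I ≤ (⊥ : Ideal R).jacobson) (s : ℕ) :
    GStat I s := by
  induction s with
  | zero =>
    intro M _ _ _ m J hJ z hz hI t ht
    have h1 : Ideal.span (Set.range z) = ⊥ := by
      rw [Set.range_eq_empty]; simp
    rw [h1, sup_bot_eq] at hI
    obtain ⟨n, hn⟩ := Ideal.exists_pow_le_of_le_radical_of_fg hI (IsNoetherian.noetherian I)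
    exact ⟨n, fun a ha => hJ a (hn ha)⟩
  | succ s ih =>
    intro M _ _ _ m J hJ z hz hI t ht
    obtain ⟨n, hn⟩ := Gam_stab I M
    have hG : ∀ k, ∀ q : M ⧸ Gam I M n, (∀ a ∈ I ^ k, a • q = 0) → q = 0 := by
      intro k q hq
      obtain ⟨p, rfl⟩ := (Gam I M n).mkQ_surjective q
      have := hn k p hq
      rwa [Submodule.mkQ_apply, Submodule.Quotient.mk_eq_zero]
    have S := ses_mkQ (Gam I M n)
    have hGt : ∀ a ∈ I ^ n, ∀ q : Gam I M n, a • q = 0 := by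
      rintro a ha ⟨q, hq⟩
      exact Subtype.ext (hq a ha)
    -- local cohomology of the quotient
    have hN : ∀ i ≤ s + 1, ∀ a ∈ I ^ t, ∀ h : H I i (M ⧸ Gam I M n), a • h = 0 := by
      intro i hi a ha h
      obtain ⟨w, hw⟩ := S.ex_d I h (H_tors_zero I hGt _ _)
      rw [← hw, ← map_smul, ht i hi a ha w, map_zero]
    have hN0 : ∀ h : H I 0 (M ⧸ Gam I M n), h = 0 := by
      intro h
      obtain ⟨k, q, hq, rfl⟩ := ga_surj I h
      obtain rfl := hG k q hq
      have := ga_map I (0 : M ⧸ Gam I M n) hq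
        (0 : (M ⧸ Gam I M n) →ₗ[R] (M ⧸ Gam I M n)) (by simp)
      have h2 := ga_map I (0 : M ⧸ Gam I M n) hq (LinearMap.lsmul R _ (0 : R)) (by simp)
      rw [hm_smul, zero_smul] at h2
      rw [h2]
      simp only [map_zero]
    clear ht S hGt hn
    suffices hm : (Gam I M n).mkQ m = 0 by
      rw [Submodule.mkQ_apply, Submodule.Quotient.mk_eq_zero] at hm
      exact ⟨n, hm⟩
    have hJ' : ∀ a ∈ J, a • (Gam I M n).mkQ m = 0 := by
      intro a ha
      rw [← map_smul, hJ a ha, map_zero]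
    exact lemG_core I hjac s ih _ _ J hJ' z hz hI t hN hN0 hG

end LemG
end RelB


namespace RelB

section ThmA

lemma range_succ {c : ℕ} (x : Fin (c + 1) → R) :
    Ideal.span (Set.range x) =
      Ideal.span {x 0} ⊔ Ideal.span (Set.range (fun j : Fin c => x j.succ)) := by
  rw [← Ideal.span_insert]
  congr 1
  ext a
  simp [Fin.exists_fin_succ, eq_comm]

theorem thmA [IsNoetherianRing R] (I : Ideal R) (hjac : I ≤ (⊥ : Ideal R).jacobson) (c : ℕ) :
    ∀ (M : Type) [AddCommGroup M] [Module R M] [Module.Finite R M] (x : Fin c → R)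
      (_ : ∀ j, x j ∈ I)
      (_ : I ≤ (Ideal.span (Set.range x) ⊔ Module.annihilator R M).radical)
      (_ : ∀ i < c, Function.Surjective (ph I i (M := M))), IsWeakSeq I M x := by
  induction c with
  | zero => exact fun M _ _ _ x _ _ _ i => i.elim0
  | succ c ih =>
    intro M _ _ _ x hx hI hph
    have hfirst : ∀ m : M, x 0 • m = 0 → ∀ a ∈ I, a • m = 0 := by
      intro m hm
      obtain ⟨n, hn⟩ := lemG I hjac c M m (Ideal.span {x 0} ⊔ Module.annihilator R M)
        (by
          intro a ha
          obtain ⟨u, hu, v, hv, rfl⟩ := Submodule.mem_sup.1 ha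
          obtain ⟨u, rfl⟩ := Ideal.mem_span_singleton'.1 hu
          rw [add_smul, mul_smul, hm, smul_zero, zero_add]
          exact Module.mem_annihilator.1 hv m)
        (fun j => x j.succ) (fun j => hx _)
        (by
          refine hI.trans (le_of_eq ?_)
          rw [range_succ, sup_right_comm])
        1 (by
          intro i hi a ha h
          obtain ⟨e, rfl⟩ := hph i (by omega) h
          rw [← map_smul, ph_smul I (by simpa using ha) e, map_zero])
      exact ph0_surj I (hph 0 (by omega)) n m hn
    rw [weak_succ]
    refine ⟨hfirst, ih _ _ (fun j => hx _) ?_ ?_⟩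
    · refine hI.trans (Ideal.radical_mono ?_)
      rw [range_succ]
      refine sup_le (sup_le ?_ le_sup_left) ?_
      · refine le_trans ?_ le_sup_right
        rw [Ideal.span_le, Set.singleton_subset_iff, SetLike.mem_coe, Module.mem_annihilator]
        intro q
        obtain ⟨p, rfl⟩ := (xM M (x 0)).mkQ_surjective q
        rw [← map_smul, Submodule.mkQ_apply, Submodule.Quotient.mk_eq_zero, mem_xM]
        exact ⟨p, rfl⟩
      · refine le_trans ?_ le_sup_right
        intro a ha
        rw [Module.mem_annihilator] at ha ⊢
        intro q
        obtain ⟨p, rfl⟩ := (xM M (x 0)).mkQ_surjective q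
        rw [← map_smul, ha, map_zero]
    · intro i hi
      exact lemS I (x 0) (hx 0) hfirst i (hph i (by omega)) (hph (i + 1) (by omega))

lemma weak_succ' (I : Ideal R) {M : Type} [AddCommGroup M] [Module R M] {c : ℕ}
    (x : Fin (c + 1) → R) (y : R) (x' : Fin c → R) (hy : x 0 = y)
    (hx : ∀ j, x j.succ = x' j) (h : IsWeakSeq I M x) :
    (∀ m : M, y • m = 0 → ∀ a ∈ I, a • m = 0) ∧ IsWeakSeq I (M ⧸ xM M y) x' := by
  subst hy
  obtain rfl : (fun j : Fin c => x j.succ) = x' := funext hx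
  exact (weak_succ I x).1 h

theorem lemH (I : Ideal R) (r : ℕ) :
    ∀ (c : ℕ) (_ : r < c) (M : Type) [AddCommGroup M] [Module R M] (x : Fin c → R)
      (_ : ∀ j, x j ∈ I) (_ : ∀ i < r, ∀ h : H I i M, h = 0)
      (_ : ∀ k ≥ 1, IsWeakSeq I M (fun j => if (j : ℕ) < r then x j else x j ^ k))
      (z : H I r M) (_ : ∀ j : Fin c, (j : ℕ) < r → x j • z = 0),
      ∃ e, ph I r e = z := by
  induction r with
  | zero =>
    intro c hc M _ _ x hx _ hw z _
    obtain ⟨c, rfl⟩ : ∃ d, c = d + 1 := ⟨c - 1, by omega⟩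
    obtain ⟨n, m, h, rfl⟩ := ga_surj I z
    have h1 := ((weak_succ I _).1 (hw (n + 1) (by omega))).1 m (by
      simp only [not_lt_zero, if_false]
      rw [pow_succ', mul_smul, h _ (Ideal.pow_mem_pow (hx 0) n), smul_zero])
    have h2 : ∀ a ∈ I ^ 1, a • m = 0 := by simpa using h1
    obtain ⟨e, he⟩ := ga_ph I m h2
    exact ⟨e, he.trans (ga_eq I m _ _)⟩
  | succ r ih =>
    intro c hc M _ _ x hx hv hw z hz
    obtain ⟨c, rfl⟩ : ∃ d, c = d + 1 := ⟨c - 1, by omega⟩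
    have hw' : ∀ k ≥ 1, (∀ m : M, x 0 • m = 0 → ∀ a ∈ I, a • m = 0) ∧
        IsWeakSeq I (M ⧸ xM M (x 0))
          (fun j => if (j : ℕ) < r then x j.succ else x j.succ ^ k) := by
      intro k hk
      exact weak_succ' I _ _ _ (by simp) (by simp) (hw k hk)
    have hreg : ∀ m : M, x 0 • m = 0 → m = 0 := by
      intro m hm
      have h2 : ∀ a ∈ I ^ 1, a • m = 0 := by simpa using (hw' 1 le_rfl).1 m hm
      exact ga_zero I (hv 0 (by omega) (ga I 1 m h2))
    have S := ses_reg (x 0) hreg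
    obtain ⟨w, hw1⟩ := S.ex_f I z (by rw [hm_smul]; exact hz 0 (by simp))
    have hinj : ∀ u : H I r (M ⧸ xM M (x 0)), S.de I r u = 0 → u = 0 := by
      intro u hu
      obtain ⟨v, rfl⟩ := S.ex_d I u hu
      rw [hv r (by omega) v, map_zero]
    obtain ⟨e, he⟩ := ih c (by omega) (M ⧸ xM M (x 0)) (fun j => x j.succ) (fun j => hx _)
      (by
        intro i hi h
        obtain ⟨v, rfl⟩ := S.ex_d I h (hv (i + 1) (by omega) _)
        rw [hv i (by omega) v, map_zero])
      (fun k hk => (hw' k hk).2) w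
      (by
        intro j hj
        apply hinj
        rw [map_smul, hw1]
        exact hz j.succ (by simpa using hj))
    exact ⟨S.dE I r e, by rw [S.ph_dE, he, hw1]⟩

end ThmA

section Main

lemma cd_unique (I : Ideal R) (M : Type) [AddCommGroup M] [Module R M] {c d : ℕ}
    (hc : IsCd I M c) (hd : IsCd I M d) : c = d := by
  by_contra h
  rcases Nat.lt_or_gt_of_ne h with h | h
  · exact not_subsingleton_iff_nontrivial.2 hd.1 (hc.2 d h)
  · exact not_subsingleton_iff_nontrivial.2 hc.1 (hd.2 c h)

/-- From a generating sequence up to radical, produce elements of `I` all of whose positive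
powers form systems of parameters. -/
lemma exists_rsop (I : Ideal R) (M : Type) [AddCommGroup M] [Module R M] {c : ℕ}
    (ha : IsAra I M c) : ∃ a : Fin c → R, (∀ j, a j ∈ I) ∧
      ∀ p : Fin c → ℕ, (∀ j, 1 ≤ p j) → IsRsop I M (fun j => a j ^ p j) := by
  obtain ⟨x, hx⟩ := ha.1
  have h1 : ∀ j, ∃ a ∈ I, ∃ n : ℕ, ∃ b ∈ Module.annihilator R M, a + b = x j ^ n := by
    intro j
    have : x j ∈ (I + Module.annihilator R M).radical := by
      rw [← hx]
      exact Ideal.le_radical (le_sup_left (α := Ideal R) (Ideal.subset_span ⟨j, rfl⟩))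
    obtain ⟨n, hn⟩ := this
    obtain ⟨a, ha, b, hb, hab⟩ := Submodule.mem_sup.1 hn
    exact ⟨a, ha, n, b, hb, hab⟩
  choose a haI n b hb hab using h1
  refine ⟨a, haI, fun p hp => ⟨fun j => Ideal.pow_mem_of_mem I (haI j) _ (hp j), ?_⟩⟩
  apply le_antisymm
  · apply Ideal.radical_mono
    refine sup_le_sup_right ?_ _
    rw [Ideal.span_le]
    rintro _ ⟨j, rfl⟩
    exact Ideal.pow_mem_of_mem I (haI j) _ (hp j)
  · rw [← hx, (Ideal.radical_isRadical _).radical_le_iff]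
    refine sup_le ?_ (le_sup_right.trans Ideal.le_radical)
    rw [Ideal.span_le]
    rintro _ ⟨j, rfl⟩
    have h2 : a j ∈ (Ideal.span (Set.range fun j => a j ^ p j) +
        Module.annihilator R M).radical :=
      ⟨p j, le_sup_left (α := Ideal R) (Ideal.subset_span ⟨j, rfl⟩)⟩
    have h3 : x j ^ n j ∈ (Ideal.span (Set.range fun j => a j ^ p j) +
        Module.annihilator R M).radical := by
      rw [← hab j]
      exact Ideal.add_mem _ h2 (Ideal.le_radical (le_sup_right (α := Ideal R) (hb j)))
    exact (Ideal.radical_isRadical _) ⟨n j, h3⟩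

end Main
end RelB

/-- **Proposition 4.6.** Suppose `I` is contained in the Jacobson radical of `R`,
`cd(I,M) = ara(I,M)`, `r := grade(I,M) < c := cd(I,M)` and `H^i_I(M) = 0` for all
`i ≠ r, c`. Then the following are equivalent:
(i) `M` is `I`-relative surjective Buchsbaum;
(ii) `M` is `I`-relative Buchsbaum;
(iii) `M` is `I`-relative quasi Buchsbaum. -/
theorem proposition_4_6 [IsNoetherianRing R] (I : Ideal R)
    (hjac : I ≤ (⊥ : Ideal R).jacobson)
    (M : Type) [AddCommGroup M] [Module R M] [Module.Finite R M]
    (hne : I • (⊤ : Submodule R M) ≠ ⊤)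
    (c r : ℕ) (hc : IsCd I M c) (ha : IsAra I M c)
    (hr : IsGrade I M r) (hrc : r < c)
    (hvan : ∀ i : ℕ, i ≠ r → i ≠ c → Subsingleton (locH I i M)) :
    (IsRelSurjBuchsbaum I M ↔ IsRelBuchsbaum I M) ∧
      (IsRelBuchsbaum I M ↔ IsRelQuasiBuchsbaum I M) := by
  have h12 : IsRelSurjBuchsbaum I M → IsRelBuchsbaum I M := by
    intro h
    refine ⟨c, hc, ha, fun x hx => RelB.thmA I hjac c M x hx.1 ?_ ?_⟩
    · have h1 : I ≤ (I + Module.annihilator R M).radical :=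
        (le_sup_left (α := Ideal R)).trans Ideal.le_radical
      rw [← hx.2] at h1
      exact h1
    · intro i hi
      exact (RelB.phiSurj_iff I i M).1 (h i ⟨c, hi, hc.1⟩)
  have h23 : IsRelBuchsbaum I M → IsRelQuasiBuchsbaum I M := by
    rintro ⟨d, hd, hd', h⟩
    exact ⟨d, hd, hd', fun x hx _ => h x hx⟩
  have h31 : IsRelQuasiBuchsbaum I M → IsRelSurjBuchsbaum I M := by
    rintro ⟨d, hd, -, h⟩ i ⟨j, hij, hj⟩
    obtain rfl := RelB.cd_unique I M hc hd
    have hic : i < c := by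
      by_contra hcon
      exact not_subsingleton_iff_nontrivial.2 hj (hc.2 j (by omega))
    rw [RelB.phiSurj_iff]
    have hv : ∀ k, k ≠ r → k ≠ c → ∀ z : RelB.H I k M, z = 0 := by
      intro k h1 h2 z
      have := (RelB.locH_sub_iff I k M).1 (hvan k h1 h2)
      exact Subsingleton.elim _ _
    intro z
    by_cases hir : i = r
    · subst hir
      obtain ⟨a, haI, hp⟩ := RelB.exists_rsop I M ha
      obtain ⟨n, hn⟩ := RelB.H_tors I z
      refine RelB.lemH I i c hic M (fun j => a j ^ (n + 2))
        (fun j => Ideal.pow_mem_of_mem I (haI j) _ (by omega))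
        (fun k hk => hv k (by omega) (by omega)) ?_ z ?_
      · intro k hk
        have hk2 : 2 ≤ (n + 2) * k := by nlinarith
        have := h (fun j => a j ^ (if (j : ℕ) < i then n + 2 else (n + 2) * k))
          (hp _ (fun j => by split_ifs <;> omega))
          (fun j => Ideal.pow_le_pow_right (by split_ifs <;> omega)
            (Ideal.pow_mem_pow (haI j) _))
        convert this using 2 with j
        split_ifs
        · rfl
        · rw [pow_mul]
      · intro j _
        exact hn _ (Ideal.pow_le_pow_right (by omega) (Ideal.pow_mem_pow (haI j) (n + 2)))
    · exact ⟨0, by rw [hv i hir (by omega) z, map_zero]⟩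
  exact ⟨⟨h12, fun h => h31 (h23 h)⟩, ⟨h23, fun h => h12 (h31 h)⟩⟩
end
end

section
/- Let n be a natural number and x_1,...,x_n ∈ a. If a · Γ_{⟨x_{k+1}⟩}(M/⟨x_1,...,x_k⟩M) = 0 for all 0 ≤ k ≤ n-1, then x_1,...,x_n is both an a-weak sequence on M and a d-sequence on M. -/
/-!
Formalization of a statement from "A theory of relative generalized Cohen-Macaulay modules"
by Divaani-Aazar, Ghanbari Doust, Tousi and Zakeri.

Throughout, `R` is a commutative Noetherian ring and `M` a finitely generated `R`-module.
Conventions used below: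
* `locH I i M` is the local cohomology module `H^i_I(M)` (Mathlib's `localCohomology`).
* Conditions `cd(I,M) = c`, `ara(I,M) = n`, `f_I(M) = f`, `grade(I,M) = r` are expressed by
  the predicates `IsCd`, `IsAra`, `IsFinDim`, `IsGrade`.
* Sequences are given as functions `Fin r → R`; `pSpan M x i = ⟨x_0,…,x_{i-1}⟩M`.
* Koszul (co)homology is defined via the explicit (co)chain complex on the `p`-element
  subsets of `{0,…,n-1}`, and the canonical map `λ^i` into local cohomology is the structure
  map (at exponent 1) into the direct limit of Koszul cohomologies of powers of the sequence,
  which is the realization of `H^i_{⟨x⟩}(M)` used in the paper (2.1(iv)).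
-/

open CategoryTheory

noncomputable section

variable {R : Type} [CommRing R]

theorem pSpan_mono_aux (M : Type) [AddCommGroup M] [Module R M] {n : ℕ} (x : Fin n → R)
    {i j : Fin n} (h : i ≤ j) : pSpan M x i ≤ pSpan M x j :=
  Submodule.smul_mono_left (Ideal.span_mono (Set.image_mono fun _ hk => lt_of_lt_of_le hk h))

theorem pSpan_succ_aux (M : Type) [AddCommGroup M] [Module R M] {n : ℕ} (x : Fin n → R)
    {i j : Fin n} (h : j.val = i.val + 1) {m : M} (hm : m ∈ pSpan M x j) :
    ∃ p ∈ pSpan M x i, ∃ u : M, m = p + x i • u := by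
  have hs : {k : Fin n | k < j} = {k | k < i} ∪ {i} := by
    ext k
    simp only [Set.mem_setOf_eq, Set.mem_union, Set.mem_singleton_iff, Fin.lt_def, Fin.ext_iff]
    omega
  unfold pSpan at hm
  rw [hs, Set.image_union, Set.image_singleton, Ideal.span_union, Submodule.sup_smul,
    Submodule.mem_sup] at hm
  obtain ⟨p, hp, q, hq, rfl⟩ := hm
  rw [Submodule.ideal_span_singleton_smul] at hq
  obtain ⟨u, -, rfl⟩ := (Submodule.mem_smul_pointwise_iff_exists _ _ _).1 hq
  exact ⟨p, hp, u, rfl⟩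

theorem pSpan_descend_aux (I : Ideal R) (M : Type) [AddCommGroup M] [Module R M]
    {n : ℕ} (x : Fin n → R) (hxI : ∀ j, x j ∈ I)
    (hGamma : ∀ i : Fin n, ∀ m : M,
      (∃ t : ℕ, x i ^ t • m ∈ pSpan M x i) → ∀ r ∈ I, r • m ∈ pSpan M x i)
    (i : Fin n) (m : M) (hI : ∀ r ∈ I, r • m ∈ pSpan M x i) :
    ∀ d : ℕ, ∀ j : Fin n, j.val = i.val + d → m ∈ pSpan M x j → m ∈ pSpan M x i := by
  intro d
  induction d with
  | zero =>
    intro j hj hm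
    obtain rfl : j = i := Fin.ext hj
    exact hm
  | succ d ih =>
    intro j hj hm
    have hlt : i.val + d < n := by have := j.isLt; omega
    refine ih ⟨i.val + d, hlt⟩ rfl ?_
    set k : Fin n := ⟨i.val + d, hlt⟩ with hk
    have hik : i ≤ k := by simp [hk, Fin.le_def]
    obtain ⟨p, hp, u, hu⟩ := pSpan_succ_aux M x (i := k) (j := j) (by simp [hk]; omega) hm
    have h1 : x k • m ∈ pSpan M x k := pSpan_mono_aux M x hik (hI _ (hxI k))
    have h2 : x k ^ 2 • u ∈ pSpan M x k := by
      have : x k ^ 2 • u = x k • m - x k • p := by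
        rw [hu, smul_add, add_sub_cancel_left, smul_smul, sq]
      rw [this]
      exact Submodule.sub_mem _ h1 (Submodule.smul_mem _ _ hp)
    rw [hu]
    exact Submodule.add_mem _ hp (hGamma k u ⟨2, h2⟩ _ (hxI k))

/-- **Lemma 4.7.** Let `x₁, …, xₙ ∈ I`. If `I • Γ_{⟨x_{k+1}⟩}(M/⟨x₁,…,x_k⟩M) = 0` for all
`0 ≤ k ≤ n-1` (expressed elementwise: whenever some power of `x_{k+1}` multiplies `m` into
`⟨x₁,…,x_k⟩M`, then `I • m ⊆ ⟨x₁,…,x_k⟩M`), then `x₁, …, xₙ` is both an `I`-weak sequence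
on `M` and a d-sequence on `M`. -/
theorem lemma_4_7 [IsNoetherianRing R] (I : Ideal R)
    (M : Type) [AddCommGroup M] [Module R M] [Module.Finite R M]
    {n : ℕ} (x : Fin n → R) (hxI : ∀ j, x j ∈ I)
    (hGamma : ∀ i : Fin n, ∀ m : M,
      (∃ t : ℕ, x i ^ t • m ∈ pSpan M x i) → ∀ r ∈ I, r • m ∈ pSpan M x i) :
    IsWeakSeq I M x ∧ IsDSeq M x := by
  have hweak : IsWeakSeq I M x := fun i m hm => hGamma i m ⟨1, by simpa using hm⟩
  refine ⟨hweak, fun i j hij m => ⟨fun h => ?_, fun h => ?_⟩⟩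
  · rw [mul_smul] at h
    have hI := hweak i _ h
    refine pSpan_descend_aux I M x hxI hGamma i _ hI (j.val - i.val) j ?_ ?_
    · have : i.val ≤ j.val := hij
      omega
    · refine hGamma j m ⟨2, ?_⟩ _ (hxI j)
      rw [sq, mul_smul]
      exact pSpan_mono_aux M x hij (hI _ (hxI j))
  · rw [mul_smul]
    exact Submodule.smul_mem _ _ h
end
end

section
/- Suppose a is contained in the Jacobson radical of R and c := cd(a,M) = ara(a,M). Then the following are equivalent: (i) for every a-relative system of parameters x_1,...,x_c of M, a · Γ_{⟨x_{k+1}⟩}(M/⟨x_1,...,x_k⟩M) = 0 for all 0 ≤ k ≤ c-1; (ii) M is a-relative Buchsbaum; (iii) for every a-relative system of parameters x_1,...,x_c of M and every 0 ≤ k ≤ c-1, the R-module M/⟨x_1,...,x_k⟩M is a-relative quasi Buchsbaum. -/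
/-!
Formalization of a statement from "A theory of relative generalized Cohen-Macaulay modules"
by Divaani-Aazar, Ghanbari Doust, Tousi and Zakeri.

Throughout, `R` is a commutative Noetherian ring and `M` a finitely generated `R`-module.
Conventions used below:
* `locH I i M` is the local cohomology module `H^i_I(M)` (Mathlib's `localCohomology`).
* Conditions `cd(I,M) = c`, `ara(I,M) = n`, `f_I(M) = f`, `grade(I,M) = r` are expressed by
  the predicates `IsCd`, `IsAra`, `IsFinDim`, `IsGrade`.
* Sequences are given as functions `Fin r → R`; `pSpan M x i = ⟨x_0,…,x_{i-1}⟩M`.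
* Koszul (co)homology is defined via the explicit (co)chain complex on the `p`-element
  subsets of `{0,…,n-1}`, and the canonical map `λ^i` into local cohomology is the structure
  map (at exponent 1) into the direct limit of Koszul cohomologies of powers of the sequence,
  which is the realization of `H^i_{⟨x⟩}(M)` used in the paper (2.1(iv)).
-/

open CategoryTheory

noncomputable section

variable {R : Type} [CommRing R]

section Generic
open CategoryTheory Limits

/-- A morphism out of homology attached to a cocycle. -/
def kcls {D : Type*} [Category D] [Abelian D] (K : ChainComplex D ℕ) (Q : D) (n : ℕ)
    (z : K.X n ⟶ Q) (hz : K.d (n + 1) n ≫ z = 0) : K.homology n ⟶ Q :=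
  K.homologyι n ≫ K.descOpcycles z (n + 1) (by simp) hz

lemma kcls_surj {D : Type*} [Category D] [Abelian D] (K : ChainComplex D ℕ) (Q : D) [Injective Q] (n : ℕ)
    (α : K.homology n ⟶ Q) : ∃ z hz, kcls K Q n z hz = α := by
  let g := Injective.factorThru α (K.homologyι n)
  have hg : K.homologyι n ≫ g = α := Injective.comp_factorThru _ _
  refine ⟨K.pOpcycles n ≫ g, by simp, ?_⟩
  unfold kcls
  have : K.descOpcycles (K.pOpcycles n ≫ g) (n + 1) (by simp) (by simp) = g := by
    rw [← cancel_epi (K.pOpcycles n)]; simp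
  rw [this, hg]

lemma kcls_eq_zero_iff {D : Type*} [Category D] [Abelian D] (K : ChainComplex D ℕ) (Q : D) [Injective Q] (n : ℕ)
    (z : K.X (n + 1) ⟶ Q) (hz : K.d (n + 1 + 1) (n + 1) ≫ z = 0) :
    kcls K Q (n + 1) z hz = 0 ↔ ∃ g : K.X n ⟶ Q, K.d (n + 1) n ≫ g = z := by
  unfold kcls
  constructor
  · intro h
    have he : (ShortComplex.mk (K.homologyι (n + 1)) (K.fromOpcycles (n + 1) n) (by simp)).Exact :=
      ShortComplex.exact_of_f_is_kernel _ (K.homologyIsKernel (n + 1) n (by simp))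
    refine ⟨he.descToInjective _ h, ?_⟩
    have h3 := he.comp_descToInjective _ h
    dsimp at h3
    rw [← K.p_fromOpcycles, Category.assoc, h3, K.p_descOpcycles]
  · rintro ⟨g, rfl⟩
    have : K.descOpcycles (K.d (n + 1) n ≫ g) (n + 1 + 1) (by simp) hz =
        K.fromOpcycles (n + 1) n ≫ g := by
      rw [← cancel_epi (K.pOpcycles (n + 1)), K.p_descOpcycles, K.p_fromOpcycles_assoc]
    rw [this]; simp

lemma map_kcls {D : Type*} [Category D] [Abelian D] {K L : ChainComplex D ℕ} (φ : L ⟶ K) (Q : D) (n : ℕ)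
    (z : K.X n ⟶ Q) (hz : K.d (n + 1) n ≫ z = 0) :
    HomologicalComplex.homologyMap φ n ≫ kcls K Q n z hz =
      kcls L Q n (φ.f n ≫ z) (by rw [← φ.comm_assoc, hz, comp_zero]) := by
  unfold kcls
  rw [HomologicalComplex.homologyι_naturality_assoc]
  congr 1
  rw [← cancel_epi (HomologicalComplex.pOpcycles _ _)]
  simp

variable {C D : Type*} [Category C] [Category D] [Abelian C] [Abelian D] [HasProjectiveResolutions C]

/-- The isomorphism computing left derived functors. -/
def ldIso (F : C ⥤ D) [F.Additive] {X : C} (P : ProjectiveResolution X) (n : ℕ) :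
    (F.leftDerived n).obj X ≅ ((F.mapHomologicalComplex _).obj P.complex).homology n :=
  P.isoLeftDerivedObj F n

lemma ldIso_nat (F : C ⥤ D) [F.Additive] {X X' : C} (P : ProjectiveResolution X)
    (P' : ProjectiveResolution X') (f : X' ⟶ X) (φ : P'.complex ⟶ P.complex)
    (comm : φ.f 0 ≫ P.π.f 0 = P'.π.f 0 ≫ f) (n : ℕ) :
    (F.leftDerived n).map f ≫ (ldIso F P n).hom =
      (ldIso F P' n).hom ≫ HomologicalComplex.homologyMap ((F.mapHomologicalComplex _).map φ) n :=
  ProjectiveResolution.isoLeftDerivedObj_hom_naturality f P' P φ comm F n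

/-- A morphism out of a left derived functor attached to a cocycle. -/
def dcls (F : C ⥤ D) [F.Additive] (Q : D) {X : C} (P : ProjectiveResolution X) (n : ℕ)
    (z : F.obj (P.complex.X n) ⟶ Q) (hz : F.map (P.complex.d (n + 1) n) ≫ z = 0) :
    (F.leftDerived n).obj X ⟶ Q :=
  (ldIso F P n).hom ≫ kcls ((F.mapHomologicalComplex _).obj P.complex) Q n z hz

lemma dcls_surj (F : C ⥤ D) [F.Additive] (Q : D) [Injective Q] {X : C} (P : ProjectiveResolution X)
    (n : ℕ) (α : (F.leftDerived n).obj X ⟶ Q) : ∃ z hz, dcls F Q P n z hz = α := by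
  obtain ⟨z, hz, h⟩ := kcls_surj _ Q n ((ldIso F P n).inv ≫ α)
  refine ⟨z, hz, ?_⟩
  unfold dcls
  exact (congrArg _ h).trans (by simp)

lemma dcls_eq_zero_iff (F : C ⥤ D) [F.Additive] (Q : D) [Injective Q] {X : C} (P : ProjectiveResolution X)
    (n : ℕ) (z : F.obj (P.complex.X (n + 1)) ⟶ Q) (hz) :
    dcls F Q P (n + 1) z hz = 0 ↔ ∃ g : F.obj (P.complex.X n) ⟶ Q, F.map (P.complex.d (n + 1) n) ≫ g = z := by
  refine Iff.trans ?_ (kcls_eq_zero_iff ((F.mapHomologicalComplex _).obj P.complex) Q n z hz)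
  unfold dcls
  exact ⟨fun h => by rw [← cancel_epi (ldIso F P (n + 1)).hom, h, comp_zero], fun h => by rw [h, comp_zero]⟩

lemma map_dcls (F : C ⥤ D) [F.Additive] (Q : D) {X X' : C} (P : ProjectiveResolution X)
    (P' : ProjectiveResolution X') (f : X' ⟶ X) (φ : P'.complex ⟶ P.complex)
    (comm : φ.f 0 ≫ P.π.f 0 = P'.π.f 0 ≫ f)
    (n : ℕ) (z : F.obj (P.complex.X n) ⟶ Q) (hz) :
    (F.leftDerived n).map f ≫ dcls F Q P n z hz = dcls F Q P' n (F.map (φ.f n) ≫ z) (by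
      rw [← F.map_comp_assoc, ← φ.comm, F.map_comp, Category.assoc, hz, comp_zero]) := by
  unfold dcls
  rw [← Category.assoc, ldIso_nat F P P' f φ comm n, Category.assoc]
  exact congrArg _ (map_kcls _ _ _ _ _)
end Generic

section Bridge
open CategoryTheory Limits Opposite

instance injOpR : Injective (op (ModuleCat.of R R)) := by
  have : Projective (ModuleCat.of R R) := ModuleCat.projective_of_free (Module.Basis.singleton Unit R)
  infer_instance

/-- The morphism from `R` picking an element. -/
def pick {N : ModuleCat.{0} R} (e : N) : ModuleCat.of R R ⟶ N :=
  ModuleCat.ofHom (LinearMap.toSpanSingleton R N e)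

lemma pick_one {N : ModuleCat.{0} R} (e : N) : (pick e).hom (1 : R) = e := by
  simp [pick]

lemma pick_hom {N : ModuleCat.{0} R} (f : ModuleCat.of R R ⟶ N) : pick (f.hom (1 : R)) = f := by
  ext; simp [pick]

lemma pick_comp {N N' : ModuleCat.{0} R} (e : N) (f : N ⟶ N') : pick e ≫ f = pick (f.hom e) := by
  ext; simp [pick]

lemma pick_zero {N : ModuleCat.{0} R} : pick (0 : N) = 0 := by
  ext; simp [pick]

lemma pick_inj {N : ModuleCat.{0} R} {e e' : N} (h : pick e = pick e') : e = e' := by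
  rw [← pick_one e, h, pick_one]

/-- The contravariant hom functor, with values in the opposite category. -/
abbrev yF (Y : ModuleCat.{0} R) : ModuleCat.{0} R ⥤ (ModuleCat.{0} R)ᵒᵖ :=
  ((linearYoneda R (ModuleCat.{0} R)).obj Y).rightOp

/-- The old Ext modules. -/
abbrev OExt (X Y : ModuleCat.{0} R) (n : ℕ) : ModuleCat.{0} R :=
  ((Ext R (ModuleCat.{0} R) n).obj (op X)).obj Y

lemma oext_map (X X' Y : ModuleCat.{0} R) (n : ℕ) (f : X' ⟶ X) :
    ((Ext R (ModuleCat.{0} R) n).map f.op).app Y = (((yF Y).leftDerived n).map f).unop := rfl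

/-- morphism corresponding to a cochain -/
def zOp (X Y : ModuleCat.{0} R) (z : X ⟶ Y) : (yF Y).obj X ⟶ op (ModuleCat.of R R) :=
  (pick (N := ((linearYoneda R (ModuleCat.{0} R)).obj Y).obj (op X)) z).op

lemma zOp_surj (X Y : ModuleCat.{0} R) (w : (yF Y).obj X ⟶ op (ModuleCat.of R R)) :
    ∃ z, zOp X Y z = w :=
  ⟨w.unop.hom (1 : R), congrArg Quiver.Hom.op (pick_hom w.unop)⟩

lemma zOp_inj (X Y : ModuleCat.{0} R) (z z' : X ⟶ Y) (h : zOp X Y z = zOp X Y z') : z = z' :=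
  pick_inj (congrArg Quiver.Hom.unop h)

lemma zOp_zero (X Y : ModuleCat.{0} R) : zOp X Y 0 = 0 :=
  congrArg Quiver.Hom.op (pick_zero (N := ((linearYoneda R (ModuleCat.{0} R)).obj Y).obj (op X)))

lemma map_zOp (X X' Y : ModuleCat.{0} R) (f : X' ⟶ X) (z : X ⟶ Y) :
    (yF Y).map f ≫ zOp X Y z = zOp X' Y (f ≫ z) :=
  congrArg Quiver.Hom.op (pick_comp (N := ((linearYoneda R (ModuleCat.{0} R)).obj Y).obj (op X)) z
    (((linearYoneda R (ModuleCat.{0} R)).obj Y).map f.op))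

/-- The class in old Ext attached to a cocycle. -/
def ocls {X : ModuleCat.{0} R} (Y : ModuleCat.{0} R) (P : ProjectiveResolution X) (n : ℕ)
    (z : P.complex.X n ⟶ Y) (hz : P.complex.d (n + 1) n ≫ z = 0) : OExt X Y n :=
  (dcls (yF Y) (op (ModuleCat.of R R)) P n (zOp _ _ z) (by rw [map_zOp, hz, zOp_zero])).unop.hom (1 : R)

lemma pick_ocls {X : ModuleCat.{0} R} (Y : ModuleCat.{0} R) (P : ProjectiveResolution X) (n : ℕ)
    (z : P.complex.X n ⟶ Y) (hz : P.complex.d (n + 1) n ≫ z = 0) :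
    pick (ocls Y P n z hz) =
    (dcls (yF Y) (op (ModuleCat.of R R)) P n (zOp _ _ z) (by rw [map_zOp, hz, zOp_zero])).unop :=
  pick_hom _

lemma ocls_surj {X : ModuleCat.{0} R} (Y : ModuleCat.{0} R) (P : ProjectiveResolution X) (n : ℕ)
    (e : OExt X Y n) : ∃ z hz, ocls Y P n z hz = e := by
  obtain ⟨w, hw, h⟩ := dcls_surj (yF Y) (op (ModuleCat.of R R)) P n (pick e).op
  obtain ⟨z, rfl⟩ := zOp_surj _ _ w
  refine ⟨z, ?_, ?_⟩
  · apply zOp_inj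
    rw [← map_zOp, hw, zOp_zero]
  · apply pick_inj
    rw [pick_ocls]
    exact congrArg Quiver.Hom.unop h

lemma ocls_eq_zero_iff {X : ModuleCat.{0} R} (Y : ModuleCat.{0} R) (P : ProjectiveResolution X) (n : ℕ)
    (z : P.complex.X (n + 1) ⟶ Y) (hz : P.complex.d (n + 1 + 1) (n + 1) ≫ z = 0) :
    ocls Y P (n + 1) z hz = 0 ↔ ∃ g : P.complex.X n ⟶ Y, P.complex.d (n + 1) n ≫ g = z := by
  have h1 : ocls Y P (n + 1) z hz = 0 ↔
    dcls (yF Y) (op (ModuleCat.of R R)) P (n + 1) (zOp _ _ z) (by rw [map_zOp, hz, zOp_zero]) = 0 := by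
    constructor
    · intro h
      have := pick_ocls Y P (n + 1) z hz
      rw [h, pick_zero] at this
      exact congrArg Quiver.Hom.op this.symm
    · intro h
      apply pick_inj
      rw [pick_ocls, h, pick_zero]; rfl
  rw [h1, dcls_eq_zero_iff]
  constructor
  · rintro ⟨w, hw⟩
    obtain ⟨g, rfl⟩ := zOp_surj _ _ w
    rw [map_zOp] at hw
    exact ⟨g, zOp_inj _ _ _ _ hw⟩
  · rintro ⟨g, rfl⟩
    exact ⟨zOp _ _ g, map_zOp _ _ _ _ _⟩

lemma map_ocls {X X' : ModuleCat.{0} R} (Y : ModuleCat.{0} R) (P : ProjectiveResolution X)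
    (P' : ProjectiveResolution X') (f : X' ⟶ X) (φ : P'.complex ⟶ P.complex)
    (comm : φ.f 0 ≫ P.π.f 0 = P'.π.f 0 ≫ f) (n : ℕ)
    (z : P.complex.X n ⟶ Y) (hz : P.complex.d (n + 1) n ≫ z = 0) :
    (((Ext R (ModuleCat.{0} R) n).map f.op).app Y).hom (ocls Y P n z hz) =
      ocls Y P' n (φ.f n ≫ z) (by rw [← φ.comm_assoc, hz, comp_zero]) := by
  apply pick_inj
  rw [pick_ocls, ← pick_comp, pick_ocls, oext_map]
  have h := congrArg Quiver.Hom.unop (map_dcls (yF Y) (op (ModuleCat.of R R)) P P' f φ comm n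
    (zOp _ _ z) (by rw [map_zOp, hz, zOp_zero]))
  refine Eq.trans h (congrArg Quiver.Hom.unop ?_)
  congr 1

open Abelian in
lemma map_ocls_zero_iff {X X' : ModuleCat.{0} R} (Y : ModuleCat.{0} R) (P : ProjectiveResolution X)
    (f : X' ⟶ X) (n : ℕ)
    (z : P.complex.X (n + 1) ⟶ Y) (hz : P.complex.d (n + 1 + 1) (n + 1) ≫ z = 0) :
    (((_root_.Ext R (ModuleCat.{0} R) (n + 1)).map f.op).app Y).hom (ocls Y P (n + 1) z hz) = 0 ↔
    (Abelian.Ext.mk₀ f).comp (P.extMk z (n + 1 + 1) rfl hz) (zero_add _) = 0 := by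
  let P' := projectiveResolution X'
  let φ := ProjectiveResolution.lift f P' P
  have comm : φ.f 0 ≫ P.π.f 0 = P'.π.f 0 ≫ f := by
    have := ProjectiveResolution.lift_commutes_zero f P' P
    exact this
  rw [map_ocls Y P P' f φ comm, ocls_eq_zero_iff,
    ProjectiveResolution.mk₀_comp_extMk z (n + 1 + 1) rfl hz (R' := P') ⟨φ, comm⟩,
    ProjectiveResolution.extMk_eq_zero_iff _ _ _ _ _ n rfl]

end Bridge

section Van
open CategoryTheory Limits Opposite localCohomology

/-- The inverse system of the `R/I^t`. -/
abbrev GG (I : Ideal R) : ℕᵒᵖ ⥤ ModuleCat.{0} R := ringModIdeals (idealPowersDiagram I)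

/-- Vanishing of local cohomology via Yoneda Ext. -/
def Van (I : Ideal R) (n : ℕ) (M : ModuleCat.{0} R) : Prop :=
  ∀ (t : ℕᵒᵖ) (ξ : Abelian.Ext ((GG I).obj t) M n), ∃ (s : ℕᵒᵖ) (f : s ⟶ t),
    (Abelian.Ext.mk₀ ((GG I).map f)).comp ξ (zero_add _) = 0

lemma subsing_iff (I : Ideal R) (n : ℕ) (M : Type) [AddCommGroup M] [Module R M] :
    Subsingleton (locH I n M) ↔ ∀ (t : ℕᵒᵖ) (e : OExt ((GG I).obj t) (ModuleCat.of R M) n),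
      ∃ (s : ℕᵒᵖ) (f : s ⟶ t),
        (((_root_.Ext R (ModuleCat.{0} R) n).map ((GG I).map f).op).app (ModuleCat.of R M)).hom e = 0 := by
  let F : ℕᵒᵖᵒᵖ ⥤ ModuleCat.{0} R := (diagram (idealPowersDiagram I) n).flip.obj (ModuleCat.of R M)
  have e : locH I n M ≅ colimit F :=
    colimitObjIsoColimitCompEvaluation (diagram (idealPowersDiagram I) n) (ModuleCat.of R M)
  have h1 : Subsingleton (locH I n M) ↔ Subsingleton (colimit F : ModuleCat.{0} R) :=
    e.toLinearEquiv.toEquiv.subsingleton_congr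
  rw [h1]
  constructor
  · intro h t x
    obtain ⟨s, f, hf⟩ := Concrete.colimit_rep_eq_zero (F := F) (j := op t) (x := x) (hx := Subsingleton.elim _ _)
    exact ⟨s.unop, f.unop, hf⟩
  · intro h
    refine subsingleton_of_forall_eq 0 fun y => ?_
    obtain ⟨j, x, rfl⟩ := Concrete.colimit_exists_rep F y
    obtain ⟨s, f, hf⟩ := h j.unop x
    have h2 : (F.map f.op).hom x = 0 := hf
    have h3 := colimit.w F f.op
    rw [← h3]
    change (colimit.ι F (op s)).hom ((F.map f.op).hom x) = 0
    rw [h2, map_zero]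

lemma subsing_iff_van (I : Ideal R) (n : ℕ) (M : Type) [AddCommGroup M] [Module R M] :
    Subsingleton (locH I (n + 1) M) ↔ Van I (n + 1) (ModuleCat.of R M) := by
  rw [subsing_iff]
  constructor
  · intro h t ξ
    let P := projectiveResolution ((GG I).obj t)
    obtain ⟨z, hz, rfl⟩ := P.extMk_surjective ξ _ rfl
    obtain ⟨s, f, hf⟩ := h t (ocls _ P (n + 1) z hz)
    exact ⟨s, f, (map_ocls_zero_iff _ P _ n z hz).1 hf⟩
  · intro h t e
    let P := projectiveResolution ((GG I).obj t)
    obtain ⟨z, hz, rfl⟩ := ocls_surj _ P (n + 1) e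
    obtain ⟨s, f, hf⟩ := h t (P.extMk z _ rfl hz)
    exact ⟨s, f, (map_ocls_zero_iff _ P _ n z hz).2 hf⟩
end Van

section VanLemmas
open CategoryTheory Limits Opposite localCohomology Abelian

lemma ses_nat {F N E N' : Type} [AddCommGroup F] [AddCommGroup N] [AddCommGroup E] [AddCommGroup N']
    [Module R F] [Module R N] [Module R E] [Module R N'] (K : ModuleCat.{0} R) {i j : ℕ}
    (p : F →ₗ[R] N) (hp : Function.Surjective p) (p' : E →ₗ[R] N') (hp' : Function.Surjective p')
    (a : E →ₗ[R] F) (g : N' →ₗ[R] N) (h : ∀ e, p (a e) = g (p' e))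
    (h' : ∀ e ∈ LinearMap.ker p', a e ∈ LinearMap.ker p)
    (ζ : Abelian.Ext (ModuleCat.of R (LinearMap.ker p)) K i) (hij : 1 + i = j)
    (h0 : (Abelian.Ext.mk₀ (ModuleCat.ofHom (a.restrict h'))).comp ζ (zero_add _) = 0) :
    (Abelian.Ext.mk₀ (ModuleCat.ofHom g)).comp
      ((LinearMap.shortExact_shortComplexKer hp).extClass.comp ζ hij) (zero_add _) = 0 := by
  let φ : p'.shortComplexKer ⟶ p.shortComplexKer :=
    { τ₁ := ModuleCat.ofHom (a.restrict h')
      τ₂ := ModuleCat.ofHom a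
      τ₃ := ModuleCat.ofHom g
      comm₁₂ := by ext; rfl
      comm₂₃ := by ext e; exact h e }
  have h1 := ShortComplex.ShortExact.extClass_naturality
    (LinearMap.shortExact_shortComplexKer hp') (LinearMap.shortExact_shortComplexKer hp) φ
  have h2 : (Abelian.Ext.mk₀ φ.τ₃).comp
      ((LinearMap.shortExact_shortComplexKer hp).extClass.comp ζ hij) (zero_add _) = 0 := by
    rw [← Abelian.Ext.comp_assoc _ _ _ (zero_add 1) hij (by omega), ← h1,
      Abelian.Ext.comp_assoc _ _ _ (add_zero 1) (zero_add i) (by omega)]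
    have h3 : (Abelian.Ext.mk₀ φ.τ₁).comp ζ (zero_add _) = 0 := h0
    rw [h3, Abelian.Ext.comp_zero]
  exact h2

lemma pull_exists {F N N' : Type} [AddCommGroup F] [AddCommGroup N] [AddCommGroup N']
    [Module R F] [Module R N] [Module R N'] (p : F →ₗ[R] N) (g : N' →ₗ[R] N) (G : Submodule R F)
    (hg : ∀ b, g b ∈ Submodule.map p G) :
    ∃ (E : Type) (_ : AddCommGroup E) (_ : Module R E) (p' : E →ₗ[R] N') (a : E →ₗ[R] F),
      Function.Surjective p' ∧ (∀ e, p (a e) = g (p' e)) ∧ ∀ e, a e ∈ G := by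
  let E : Submodule R (G × N') :=
    LinearMap.eqLocus (p ∘ₗ G.subtype ∘ₗ LinearMap.fst R G N') (g ∘ₗ LinearMap.snd R G N')
  refine ⟨E, inferInstance, inferInstance, LinearMap.snd R G N' ∘ₗ E.subtype,
    G.subtype ∘ₗ LinearMap.fst R G N' ∘ₗ E.subtype, ?_, fun e => e.2, fun e => e.1.1.2⟩
  intro b
  obtain ⟨y, hy, hyb⟩ := hg b
  exact ⟨⟨(⟨y, hy⟩, b), hyb⟩, rfl⟩

/-- Artin–Rees for Ext classes with coefficients killed by `J`. -/
lemma ext_ar [IsNoetherianRing R] (J : Ideal R) (K : Type) [AddCommGroup K] [Module R K]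
    (hK : ∀ a ∈ J, ∀ m : K, a • m = 0) (i : ℕ) :
    ∀ (N : Type) [AddCommGroup N] [Module R N] [Module.Finite R N]
      (η : Abelian.Ext (ModuleCat.of R N) (ModuleCat.of R K) i),
      ∃ s : ℕ, ∀ (N' : Type) [AddCommGroup N'] [Module R N'] (g : N' →ₗ[R] N),
        (∀ b, g b ∈ J ^ s • (⊤ : Submodule R N)) →
        (Abelian.Ext.mk₀ (ModuleCat.ofHom g)).comp η (zero_add _) = 0 := by
  induction i with
  | zero =>
    intro N _ _ _ η
    obtain ⟨f, rfl⟩ := (Abelian.Ext.mk₀_bijective _ _).2 η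
    refine ⟨1, fun N' _ _ g hg => ?_⟩
    rw [Abelian.Ext.mk₀_comp_mk₀]
    have : ModuleCat.ofHom g ≫ f = 0 := by
      ext b
      have hle : J ^ 1 • (⊤ : Submodule R N) ≤ LinearMap.ker f.hom := by
        rw [Submodule.smul_le]
        intro a ha n _
        rw [LinearMap.mem_ker, map_smul]
        exact hK a (by simpa using ha) _
      exact hle (hg b)
    rw [this, Abelian.Ext.mk₀_zero]
  | succ i ih =>
    intro N _ _ _ η
    obtain ⟨n, p, hp⟩ := Module.Finite.exists_fin' R N
    have hproj : Projective (ModuleCat.of R (Fin n → R)) :=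
      ModuleCat.projective_of_free (Pi.basisFun R (Fin n))
    obtain ⟨ζ, rfl⟩ := Abelian.Ext.contravariant_sequence_exact₃
      (LinearMap.shortExact_shortComplexKer hp) (ModuleCat.of R K) η
      (Abelian.Ext.eq_zero_of_projective (P := ModuleCat.of R (Fin n → R)) _) (add_comm 1 i)
    obtain ⟨s, hs⟩ := ih (LinearMap.ker p) ζ
    obtain ⟨k, hk⟩ := Ideal.exists_pow_inf_eq_pow_smul J (LinearMap.ker p)
    refine ⟨k + s, fun N' _ _ g hg => ?_⟩
    obtain ⟨E, _, _, p', a, hp', hE, haG⟩ := pull_exists p g (J ^ (k + s) • ⊤) (fun b => by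
      have := hg b
      rwa [Submodule.map_smul'', Submodule.map_top, LinearMap.range_eq_top.2 hp])
    have h' : ∀ e ∈ LinearMap.ker p', a e ∈ LinearMap.ker p := by
      intro e he
      rw [LinearMap.mem_ker] at he ⊢
      rw [hE, he, map_zero]
    refine ses_nat (F := Fin n → R) (N := N) (E := E) (N' := N') (ModuleCat.of R K) p hp p' hp' a g
      hE h' ζ _ (hs _ (a.restrict h') ?_)
    · rintro ⟨e, he⟩
      have h1 : a e ∈ J ^ (k + s) • ⊤ ⊓ LinearMap.ker p := by
        refine ⟨haG e, ?_⟩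
        rw [LinearMap.mem_ker] at he
        rw [SetLike.mem_coe, LinearMap.mem_ker, hE, he, map_zero]
      rw [hk _ (by omega), show k + s - k = s by omega] at h1
      have h2 : a e ∈ J ^ s • LinearMap.ker p := Submodule.smul_mono le_rfl inf_le_right h1
      have h3 : a e ∈ Submodule.map (LinearMap.ker p).subtype (J ^ s • ⊤) := by
        rwa [Submodule.map_smul'', Submodule.map_top, Submodule.range_subtype]
      obtain ⟨y, hy, hye⟩ := h3
      have : y = a.restrict h' ⟨e, he⟩ := Subtype.ext hye
      rwa [← this]

lemma van_of_killed [IsNoetherianRing R] (I : Ideal R) (e : ℕ) (K : Type) [AddCommGroup K] [Module R K]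
    (hK : ∀ a ∈ I ^ e, ∀ m : K, a • m = 0) (i : ℕ) : Van I (i + 1) (ModuleCat.of R K) := by
  intro t ξ
  let q (t : ℕ) : R →ₗ[R] (R ⧸ I ^ t) := Submodule.mkQ (I ^ t)
  have hq (t : ℕ) : Function.Surjective (q t) := Submodule.mkQ_surjective _
  obtain ⟨t, rfl⟩ : ∃ t', t = op t' := ⟨t.unop, rfl⟩
  have hproj : Projective (ModuleCat.of R R) :=
    ModuleCat.projective_of_free (Module.Basis.singleton Unit R)
  obtain ⟨ζ, rfl⟩ := Abelian.Ext.contravariant_sequence_exact₃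
      (LinearMap.shortExact_shortComplexKer (hq t)) (ModuleCat.of R K) ξ
      (Abelian.Ext.eq_zero_of_projective (P := ModuleCat.of R R) _) (add_comm 1 i)
  obtain ⟨s, hs⟩ := ext_ar (I ^ e) K hK i (LinearMap.ker (q t)) ζ
  have hle : t ≤ e * s + t := by omega
  refine ⟨op (e * s + t), (homOfLE hle).op, ?_⟩
  have h' : ∀ r ∈ LinearMap.ker (q (e * s + t)), (LinearMap.id : R →ₗ[R] R) r ∈ LinearMap.ker (q t) := by
    intro r hr
    simp only [q, Submodule.ker_mkQ] at hr ⊢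
    exact Ideal.pow_le_pow_right hle hr
  refine ses_nat _ (q t) (hq t) (q (e * s + t)) (hq _) LinearMap.id _ (fun r => rfl) h' ζ _
    (hs _ (LinearMap.restrict LinearMap.id h') ?_)
  · rintro ⟨r, hr⟩
    have h2 : r ∈ (I ^ e) ^ s • LinearMap.ker (q t) := by
      simp only [q, Submodule.ker_mkQ] at hr ⊢
      rwa [← pow_mul, smul_eq_mul, ← pow_add]
    have h3 : r ∈ Submodule.map (LinearMap.ker (q t)).subtype ((I ^ e) ^ s • ⊤) := by
      rwa [Submodule.map_smul'', Submodule.map_top, Submodule.range_subtype]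
    obtain ⟨y, hy, hye⟩ := h3
    have : y = LinearMap.restrict LinearMap.id h' ⟨r, hr⟩ := Subtype.ext hye
    rwa [← this]

/-- The class `ξ` dies in the limit. -/
def Ev (I : Ideal R) {n : ℕ} {M : ModuleCat.{0} R} {t : ℕᵒᵖ}
    (ξ : Abelian.Ext ((GG I).obj t) M n) : Prop :=
  ∃ (s : ℕᵒᵖ) (f : s ⟶ t), (Abelian.Ext.mk₀ ((GG I).map f)).comp ξ (zero_add _) = 0

lemma ev_of_res (I : Ideal R) {n : ℕ} {M : ModuleCat.{0} R} {t s : ℕᵒᵖ} (f : s ⟶ t)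
    (ξ : Abelian.Ext ((GG I).obj t) M n)
    (h : Ev I ((Abelian.Ext.mk₀ ((GG I).map f)).comp ξ (zero_add _))) : Ev I ξ := by
  obtain ⟨r, g, hg⟩ := h
  refine ⟨r, g ≫ f, ?_⟩
  rwa [Functor.map_comp, ← Abelian.Ext.mk₀_comp_mk₀_assoc]

lemma van_step [IsNoetherianRing R] (I : Ideal R) (x : R) (hx : x ∈ I) (N N' : Type)
    [AddCommGroup N] [Module R N] [AddCommGroup N'] [Module R N'] (p : N →ₗ[R] N')
    (hp : Function.Surjective p) (hker : ∀ m, p m = 0 ↔ ∃ m', x • m' = m)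
    (hkill : ∀ m : N, x • m = 0 → ∀ a ∈ I, a • m = 0) (n : ℕ)
    (hN' : Van I n (ModuleCat.of R N')) : Van I (n + 1) (ModuleCat.of R N) := by
  let q : N →ₗ[R] LinearMap.ker p := (LinearMap.lsmul R N x).codRestrict _
    (fun m => (hker _).2 ⟨m, rfl⟩)
  have hq : Function.Surjective q := by
    rintro ⟨m, hm⟩
    obtain ⟨m', h⟩ := (hker _).1 hm
    exact ⟨m', Subtype.ext h⟩
  have hK : Van I (n + 1) (ModuleCat.of R (LinearMap.ker q)) := by
    refine van_of_killed I 1 _ (fun a ha m => ?_) n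
    obtain ⟨m, hm⟩ := m
    apply Subtype.ext
    exact hkill m (congrArg Subtype.val hm) a (by simpa using ha)
  have hfac : ModuleCat.ofHom q ≫ ModuleCat.ofHom (LinearMap.ker p).subtype
    = x • 𝟙 (ModuleCat.of R N) := by ext m; rfl
  -- two steps
  have step2 : ∀ (t : ℕᵒᵖ) (ξ : Abelian.Ext ((GG I).obj t) (ModuleCat.of R N) (n + 1)),
      ξ.comp (Abelian.Ext.mk₀ (ModuleCat.ofHom q)) (add_zero _) = 0 → Ev I ξ := by
    intro t ξ h
    obtain ⟨κ, rfl⟩ := Abelian.Ext.covariant_sequence_exact₂ _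
      (LinearMap.shortExact_shortComplexKer hq) ξ h
    obtain ⟨s, f, hf⟩ := hK t κ
    refine ⟨s, f, ?_⟩
    rw [← Abelian.Ext.comp_assoc_of_third_deg_zero]
    erw [hf]
    rw [Abelian.Ext.zero_comp]
  have step1 : ∀ (t : ℕᵒᵖ) (ξ : Abelian.Ext ((GG I).obj t) (ModuleCat.of R N) (n + 1)),
      x • ξ = 0 → Ev I ξ := by
    intro t ξ h
    rw [Abelian.Ext.smul_eq_comp_mk₀, ← hfac, ← Abelian.Ext.mk₀_comp_mk₀,
      ← Abelian.Ext.comp_assoc_of_third_deg_zero] at h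
    obtain ⟨ρ, hρ⟩ := Abelian.Ext.covariant_sequence_exact₁ _
      (LinearMap.shortExact_shortComplexKer hp) _ h rfl
    obtain ⟨s, f, hf⟩ := hN' t ρ
    apply ev_of_res I f
    apply step2
    rw [Abelian.Ext.comp_assoc_of_third_deg_zero]
    erw [← hρ]
    rw [← Abelian.Ext.comp_assoc _ _ _ (zero_add n) rfl (by omega)]
    erw [hf]
    rw [Abelian.Ext.zero_comp]
  have step0 : ∀ (k : ℕ) (t : ℕᵒᵖ) (ξ : Abelian.Ext ((GG I).obj t) (ModuleCat.of R N) (n + 1)),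
      x ^ k • ξ = 0 → Ev I ξ := by
    intro k
    induction k with
    | zero =>
      intro t ξ h
      rw [pow_zero, one_smul] at h
      exact ⟨t, 𝟙 t, by rw [h, Abelian.Ext.comp_zero]⟩
    | succ k ih =>
      intro t ξ h
      rw [pow_succ, mul_smul] at h
      obtain ⟨s, f, hf⟩ := ih t _ h
      apply ev_of_res I f
      apply step1
      rwa [← Abelian.Ext.comp_smul]
  intro t ξ
  refine step0 t.unop t ξ ?_
  have h0 : x ^ t.unop • 𝟙 ((GG I).obj t) = 0 := by
    ext r
    obtain ⟨r, rfl⟩ := Submodule.mkQ_surjective _ r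
    change x ^ t.unop • (Submodule.mkQ (I ^ t.unop) r) = 0
    rw [← map_smul, Submodule.mkQ_apply, Submodule.Quotient.mk_eq_zero]
    exact Ideal.mul_mem_right _ _ (Ideal.pow_mem_pow hx _)
  rw [← Abelian.Ext.mk₀_id_comp ξ, ← Abelian.Ext.smul_comp, ← Abelian.Ext.mk₀_smul, h0,
    Abelian.Ext.mk₀_zero, Abelian.Ext.zero_comp]

lemma van_iso (I : Ideal R) (n : ℕ) (N N' : Type)
    [AddCommGroup N] [Module R N] [AddCommGroup N'] [Module R N'] (e : N ≃ₗ[R] N')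
    (h : Van I n (ModuleCat.of R N)) : Van I n (ModuleCat.of R N') := by
  intro t ξ
  obtain ⟨s, f, hf⟩ := h t (ξ.comp (Abelian.Ext.mk₀ (ModuleCat.ofHom e.symm.toLinearMap)) (add_zero _))
  refine ⟨s, f, ?_⟩
  rw [← Abelian.Ext.comp_assoc_of_third_deg_zero] at hf
  have h1 : ModuleCat.ofHom e.symm.toLinearMap ≫ ModuleCat.ofHom e.toLinearMap = 𝟙 _ := by
    ext m; simp
  rw [← Abelian.Ext.comp_mk₀_id ((Abelian.Ext.mk₀ ((GG I).map f)).comp ξ _), ← h1,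
    ← Abelian.Ext.mk₀_comp_mk₀, ← Abelian.Ext.comp_assoc_of_third_deg_zero, hf,
    Abelian.Ext.zero_comp]

end VanLemmas

open PrimeSpectrum in
lemma rad_iff [IsNoetherianRing R] (J K : Ideal R) (N : Type) [AddCommGroup N] [Module R N] [Module.Finite R N] :
    (J + Module.annihilator R N).radical = (K + Module.annihilator R N).radical ↔
      zeroLocus (J : Set R) ∩ Module.support R N = zeroLocus (K : Set R) ∩ Module.support R N := by
  rw [← PrimeSpectrum.zeroLocus_eq_iff, Submodule.add_eq_sup, Submodule.add_eq_sup,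
    PrimeSpectrum.zeroLocus_sup, PrimeSpectrum.zeroLocus_sup, Module.support_eq_zeroLocus]

open PrimeSpectrum in
lemma rad_iff_append [IsNoetherianRing R] (I : Ideal R) (M : Type) [AddCommGroup M] [Module R M]
    [Module.Finite R M] {k l : ℕ} (u : Fin k → R) (y : Fin l → R) (hu : ∀ i, u i ∈ I) :
    (Ideal.span (Set.range (Fin.append u y)) + Module.annihilator R M).radical
      = (I + Module.annihilator R M).radical ↔
    (Ideal.span (Set.range y) + Module.annihilator R (M ⧸ Ideal.span (Set.range u) • (⊤ : Submodule R M))).radical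
      = (I + Module.annihilator R (M ⧸ Ideal.span (Set.range u) • (⊤ : Submodule R M))).radical := by
  rw [rad_iff, rad_iff, Module.support_quotient]
  have h1 : Set.range (Fin.append u y) = Set.range u ∪ Set.range y := by
    ext a; constructor
    · rintro ⟨i, rfl⟩
      refine Fin.addCases (fun i => ?_) (fun i => ?_) i
      · left; exact ⟨i, by simp⟩
      · right; exact ⟨i, by simp⟩
    · rintro (⟨i, rfl⟩ | ⟨i, rfl⟩)
      · exact ⟨Fin.castAdd l i, by simp⟩
      · exact ⟨Fin.natAdd k i, by simp⟩
  have h2 : zeroLocus (I : Set R) ⊆ zeroLocus (Set.range u) :=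
    zeroLocus_anti_mono (by rintro _ ⟨i, rfl⟩; exact hu i)
  rw [h1, zeroLocus_span, zeroLocus_span, zeroLocus_span, zeroLocus_union]
  constructor
  · intro h
    ext p
    have := Set.ext_iff.1 h p
    have := @h2 p
    simp only [Set.mem_inter_iff] at *
    tauto
  · intro h
    ext p
    have := Set.ext_iff.1 h p
    have := @h2 p
    simp only [Set.mem_inter_iff] at *
    tauto

lemma mk_mem_smul (M : Type) [AddCommGroup M] [Module R M] (A J : Ideal R) (m : M) :
    (Submodule.Quotient.mk m : M ⧸ A • (⊤ : Submodule R M)) ∈ J • (⊤ : Submodule R (M ⧸ A • (⊤ : Submodule R M))) ↔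
      m ∈ (A ⊔ J) • (⊤ : Submodule R M) := by
  have h : J • (⊤ : Submodule R (M ⧸ A • (⊤ : Submodule R M))) =
      (J • (⊤ : Submodule R M)).map (A • (⊤ : Submodule R M)).mkQ := by
    rw [Submodule.map_smul'', Submodule.map_top, Submodule.range_mkQ]
  have : (Submodule.Quotient.mk m : M ⧸ A • (⊤ : Submodule R M)) = (A • (⊤ : Submodule R M)).mkQ m := rfl
  rw [h, this, ← Submodule.mem_comap, Submodule.comap_map_mkQ, Submodule.sup_smul]

lemma pSpan_append_natAdd (M : Type) [AddCommGroup M] [Module R M] {k l : ℕ} (u : Fin k → R) (y : Fin l → R)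
    (i : Fin l) :
    pSpan M (Fin.append u y) (Fin.natAdd k i) =
      (Ideal.span (Set.range u) ⊔ Ideal.span (y '' {j | j < i})) • (⊤ : Submodule R M) := by
  unfold pSpan
  rw [← Ideal.span_union]
  congr 2
  ext a; constructor
  · rintro ⟨j, hj, rfl⟩
    revert hj
    refine Fin.addCases (fun j => ?_) (fun j => ?_) j
    · intro _; left; exact ⟨j, by simp⟩
    · intro hj; right; exact ⟨j, by simpa using hj, by simp⟩
  · rintro (⟨j, rfl⟩ | ⟨j, hj, rfl⟩)
    · refine ⟨Fin.castAdd l j, ?_, by simp⟩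
      simp [Fin.lt_def]; omega
    · exact ⟨Fin.natAdd k j, by simpa using hj, by simp⟩

lemma pSpan_append_mid (M : Type) [AddCommGroup M] [Module R M] {k l : ℕ} (u : Fin k → R) (y : Fin l → R)
    (i : Fin (k + l)) (hi : (i : ℕ) = k) :
    pSpan M (Fin.append u y) i = Ideal.span (Set.range u) • (⊤ : Submodule R M) := by
  have hl : 0 < l := by omega
  have : i = Fin.natAdd k ⟨0, hl⟩ := by ext; simpa using hi
  rw [this, pSpan_append_natAdd]
  have : {j : Fin l | j < ⟨0, hl⟩} = ∅ := by ext j; simp [Fin.lt_def]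
  simp [this]

lemma weak_quot (I : Ideal R) (M : Type) [AddCommGroup M] [Module R M] {k l : ℕ} (u : Fin k → R) (y : Fin l → R)
    (h : IsWeakSeq I M (Fin.append u y)) :
    IsWeakSeq I (M ⧸ Ideal.span (Set.range u) • (⊤ : Submodule R M)) y := by
  intro i m hm a ha
  obtain ⟨m, rfl⟩ := Submodule.Quotient.mk_surjective _ m
  have := h (Fin.natAdd k i) m
  rw [pSpan_append_natAdd, Fin.append_right, ← mk_mem_smul] at this
  have := this (by simpa [pSpan] using hm) a ha
  rw [← mk_mem_smul] at this
  simpa [pSpan] using this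

lemma ara_quot [IsNoetherianRing R] (I : Ideal R) (M : Type) [AddCommGroup M] [Module R M]
    [Module.Finite R M] {k l : ℕ} (u : Fin k → R) (v : Fin l → R) (ha : IsAra I M (k + l))
    (hx : IsRsop I M (Fin.append u v)) :
    IsAra I (M ⧸ Ideal.span (Set.range u) • (⊤ : Submodule R M)) l := by
  have hu : ∀ i, u i ∈ I := fun i => by simpa using hx.1 (Fin.castAdd l i)
  refine ⟨⟨v, (rad_iff_append I M u v hu).1 hx.2⟩, ?_⟩
  rintro l' ⟨y, hy⟩
  have := ha.2 ⟨Fin.append u y, (rad_iff_append I M u y hu).2 hy⟩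
  omega

lemma rad_pow_congr [IsNoetherianRing R] (N : Type) [AddCommGroup N] [Module R N] [Module.Finite R N]
    {c : ℕ} (x : Fin c → R) (e : Fin c → ℕ) (he : ∀ i, 0 < e i) :
    (Ideal.span (Set.range fun i => x i ^ e i) + Module.annihilator R N).radical
      = (Ideal.span (Set.range x) + Module.annihilator R N).radical := by
  rw [rad_iff, PrimeSpectrum.zeroLocus_span, PrimeSpectrum.zeroLocus_span]
  congr 1
  ext p
  simp only [PrimeSpectrum.mem_zeroLocus, Set.range_subset_iff, SetLike.mem_coe]
  refine forall_congr' fun i => ?_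
  exact ⟨fun h => p.2.mem_of_pow_mem _ h, fun h => Ideal.pow_mem_of_mem _ h _ (he i)⟩

lemma rsop_pow [IsNoetherianRing R] (I : Ideal R) (N : Type) [AddCommGroup N] [Module R N] [Module.Finite R N]
    {c : ℕ} (x : Fin c → R) (hx : IsRsop I N x) (e : Fin c → ℕ) (he : ∀ i, 0 < e i) :
    IsRsop I N (fun i => x i ^ e i) :=
  ⟨fun i => Ideal.pow_mem_of_mem _ (hx.1 i) _ (he i), (rad_pow_congr N x e he).trans hx.2⟩

lemma pow_le_of_rsop [IsNoetherianRing R] (I : Ideal R) (M : Type) [AddCommGroup M] [Module R M]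
    {c : ℕ} (x : Fin c → R) (hx : IsRsop I M x) :
    ∃ e : ℕ, ∀ a ∈ I ^ e, ∀ m : M, a • m ∈ Ideal.span (Set.range x) • (⊤ : Submodule R M) := by
  have h1 : I ≤ (Ideal.span (Set.range x) + Module.annihilator R M).radical := by
    rw [hx.2]; exact le_trans le_sup_left Ideal.le_radical
  obtain ⟨e, he⟩ := Ideal.exists_pow_le_of_le_radical_of_fg h1 (IsNoetherian.noetherian I)
  refine ⟨e, fun a ha m => ?_⟩
  obtain ⟨b, hb, d, hd, rfl⟩ := Submodule.mem_sup.1 (he ha)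
  rw [add_smul, Module.mem_annihilator.1 hd m, add_zero]
  exact Submodule.smul_mem_smul hb trivial

section CdQuot

/-- `⟨x_0,…,x_{j-1}⟩M` with `j` a natural number. -/
def pN (M : Type) [AddCommGroup M] [Module R M] {c : ℕ} (x : Fin c → R) (j : ℕ) : Submodule R M :=
  Ideal.span (x '' {i | (i : ℕ) < j}) • (⊤ : Submodule R M)

lemma pN_succ (M : Type) [AddCommGroup M] [Module R M] {c : ℕ} (x : Fin c → R) (j : Fin c) (m : M) :
    m ∈ pN M x (j + 1) ↔ ∃ m', x j • m' - m ∈ pN M x j := by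
  have h : x '' {i | (i : ℕ) < j + 1} = x '' {i | (i : ℕ) < j} ∪ {x j} := by
    rw [← Set.image_singleton, ← Set.image_union]
    congr 1
    ext i
    simp [Fin.ext_iff]
    omega
  unfold pN
  rw [h, Ideal.span_union, Submodule.sup_smul, Submodule.mem_sup]
  constructor
  · rintro ⟨y, hy, z, hz, rfl⟩
    rw [Submodule.ideal_span_singleton_smul, Submodule.mem_smul_pointwise_iff_exists] at hz
    obtain ⟨m', -, rfl⟩ := hz
    exact ⟨m', by simpa using hy⟩
  · rintro ⟨m', hm'⟩
    refine ⟨-(x j • m' - m), Submodule.neg_mem _ hm', x j • m', ?_, by abel⟩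
    exact Submodule.smul_mem_smul (Ideal.subset_span rfl) trivial

lemma van_chain [IsNoetherianRing R] (I : Ideal R) (M : Type) [AddCommGroup M] [Module R M]
    {c : ℕ} (x : Fin c → R) (hx : ∀ j, x j ∈ I) (hw : IsWeakSeq I M x) (j : Fin c) (n : ℕ)
    (h : Van I n (ModuleCat.of R (M ⧸ pN M x (j + 1)))) :
    Van I (n + 1) (ModuleCat.of R (M ⧸ pN M x j)) := by
  have hle : pN M x j ≤ pN M x (j + 1) := by
    intro m hm
    exact (pN_succ M x j m).2 ⟨0, by simpa using hm⟩
  refine van_step I (x j) (hx j) _ _ (Submodule.factor hle) (Submodule.factor_surjective hle) ?_ ?_ n h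
  · intro m
    obtain ⟨m, rfl⟩ := Submodule.Quotient.mk_surjective _ m
    rw [show Submodule.factor hle (Submodule.Quotient.mk m) = Submodule.Quotient.mk m from rfl,
      Submodule.Quotient.mk_eq_zero, pN_succ]
    constructor
    · rintro ⟨m', h⟩
      exact ⟨Submodule.Quotient.mk m', by
        rw [← Submodule.Quotient.mk_smul]; exact (Submodule.Quotient.eq _).2 h⟩
    · rintro ⟨m', h⟩
      obtain ⟨m', rfl⟩ := Submodule.Quotient.mk_surjective _ m'
      rw [← Submodule.Quotient.mk_smul] at h
      exact ⟨m', (Submodule.Quotient.eq _).1 h⟩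
  · intro m hm a ha
    obtain ⟨m, rfl⟩ := Submodule.Quotient.mk_surjective _ m
    rw [← Submodule.Quotient.mk_smul, Submodule.Quotient.mk_eq_zero] at hm ⊢
    exact hw j m hm a ha

lemma van_top1 [IsNoetherianRing R] (I : Ideal R) (M : Type) [AddCommGroup M] [Module R M]
    {c : ℕ} (x : Fin c → R) (hx : IsRsop I M x) (hw : IsWeakSeq I M x) (d : ℕ) :
    ∀ j, j + d = c → ∀ n, d < n → Van I n (ModuleCat.of R (M ⧸ pN M x j)) := by
  induction d with
  | zero =>
    intro j hj n hn
    obtain ⟨n, rfl⟩ := Nat.exists_eq_succ_of_ne_zero (Nat.pos_iff_ne_zero.1 hn)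
    obtain ⟨e, he⟩ := pow_le_of_rsop I M x hx
    have h1 : pN M x j = Ideal.span (Set.range x) • (⊤ : Submodule R M) := by
      unfold pN
      rw [← Set.image_univ]
      congr 3
      ext i
      have := i.2
      simp; omega
    refine van_of_killed I e _ (fun a ha m => ?_) n
    obtain ⟨m, rfl⟩ := Submodule.Quotient.mk_surjective _ m
    rw [← Submodule.Quotient.mk_smul, Submodule.Quotient.mk_eq_zero, h1]
    exact he a ha m
  | succ d ih =>
    intro j hj n hn
    obtain ⟨n, rfl⟩ := Nat.exists_eq_succ_of_ne_zero (show n ≠ 0 by omega)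
    exact van_chain I M x hx.1 hw ⟨j, by omega⟩ n (ih (j + 1) (by omega) n (by omega))

lemma van_down [IsNoetherianRing R] (I : Ideal R) (M : Type) [AddCommGroup M] [Module R M]
    {c : ℕ} (x : Fin c → R) (hx : ∀ j, x j ∈ I) (hw : IsWeakSeq I M x) (j : ℕ) :
    j ≤ c → ∀ n, Van I n (ModuleCat.of R (M ⧸ pN M x j)) → Van I (j + n) (ModuleCat.of R M) := by
  induction j with
  | zero =>
    intro _ n h
    rw [zero_add]
    refine van_iso I n _ _ (Submodule.quotEquivOfEqBot _ ?_) h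
    simp [pN]
  | succ j ih =>
    intro hj n h
    have := ih (by omega) (n + 1) (van_chain I M x hx hw ⟨j, by omega⟩ n h)
    rwa [show j + 1 + n = j + (n + 1) by omega]

lemma cd_quot [IsNoetherianRing R] (I : Ideal R) (M : Type) [AddCommGroup M] [Module R M]
    [Module.Finite R M] {k l : ℕ} (u : Fin k → R) (v : Fin (l + 1) → R)
    (hx : IsRsop I M (Fin.append u v)) (hw : IsWeakSeq I M (Fin.append u v)) (hc : IsCd I M (k + (l + 1))) :
    IsCd I (M ⧸ Ideal.span (Set.range u) • (⊤ : Submodule R M)) (l + 1) := by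
  have h1 : pN M (Fin.append u v) k = Ideal.span (Set.range u) • (⊤ : Submodule R M) :=
    pSpan_append_mid M u v ⟨k, by omega⟩ rfl
  rw [← h1]
  refine ⟨?_, fun i hi => ?_⟩
  · rw [← not_subsingleton_iff_nontrivial, subsing_iff_van]
    intro h
    have h2 := van_down I M _ hx.1 hw k (by omega) (l + 1) h
    have h3 : Subsingleton (locH I (k + l + 1) M) := (subsing_iff_van I (k + l) M).2 h2
    exact (not_subsingleton_iff_nontrivial.2 hc.1) h3
  · obtain ⟨i, rfl⟩ := Nat.exists_eq_succ_of_ne_zero (show i ≠ 0 by omega)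
    rw [Nat.succ_eq_add_one, subsing_iff_van]
    exact van_top1 I M _ hx hw (l + 1) k rfl _ hi
end CdQuot

/-- **Theorem 4.8.** Suppose `I` is contained in the Jacobson radical of `R` and
`c := cd(I,M) = ara(I,M)`. Then the following are equivalent:
(i) for every `I`-relative system of parameters `x₁, …, x_c` of `M` one has
`I • Γ_{⟨x_{k+1}⟩}(M/⟨x₁,…,x_k⟩M) = 0` for all `0 ≤ k ≤ c-1` (expressed elementwise);
(ii) `M` is `I`-relative Buchsbaum;
(iii) for every `I`-relative system of parameters `x₁, …, x_c` of `M` and every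
`0 ≤ k ≤ c-1`, the module `M/⟨x₁,…,x_k⟩M` is `I`-relative quasi Buchsbaum. -/

theorem theorem_4_8 [IsNoetherianRing R] (I : Ideal R)
    (hjac : I ≤ (⊥ : Ideal R).jacobson)
    (M : Type) [AddCommGroup M] [Module R M] [Module.Finite R M]
    (c : ℕ) (hc : IsCd I M c) (ha : IsAra I M c) :
    ((∀ x : Fin c → R, IsRsop I M x → ∀ k : Fin c, ∀ m : M,
        (∃ t : ℕ, x k ^ t • m ∈ pSpan M x k) → ∀ r ∈ I, r • m ∈ pSpan M x k) ↔
      IsRelBuchsbaum I M) ∧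
    (IsRelBuchsbaum I M ↔
      ∀ x : Fin c → R, IsRsop I M x → ∀ k : Fin c,
        IsRelQuasiBuchsbaum I (M ⧸ pSpan M x k)) := by
  refine ⟨⟨fun h => ⟨c, hc, ha, fun x hx i m hm => h x hx i m ⟨1, by simpa using hm⟩⟩, ?_⟩, ?_, ?_⟩
  · rintro ⟨c', -, ha', h⟩ x hx k m ⟨t, ht⟩ r hr
    obtain rfl : c' = c := ha'.unique ha
    rcases Nat.eq_zero_or_pos t with rfl | ht0
    · exact Submodule.smul_mem _ _ (by simpa using ht)
    let e : Fin c' → ℕ := fun i => if i = k then t else 1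
    have h1 := h _ (rsop_pow I M x hx e (fun i => by simp only [e]; split_ifs <;> omega)) k m
    have h2 : pSpan M (fun i => x i ^ e i) k = pSpan M x k := by
      unfold pSpan
      congr 2
      refine Set.image_congr fun i hi => ?_
      have : i ≠ k := ne_of_lt hi
      simp [e, this]
    rw [h2] at h1
    exact h1 (by simpa [e] using ht) r hr
  · rintro ⟨c', -, ha', h⟩ x hx k
    obtain rfl : c' = c := ha'.unique ha
    obtain ⟨k, hk⟩ := k
    obtain ⟨l, rfl⟩ := Nat.exists_eq_add_of_lt hk
    obtain ⟨u, v, rfl⟩ : ∃ (u : Fin k → R) (v : Fin (l + 1) → R), x = Fin.append u v :=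
      ⟨_, _, (Fin.append_castAdd_natAdd (m := k) (n := l + 1) (f := x)).symm⟩
    have hu : ∀ i, u i ∈ I := fun i => by simpa using hx.1 (Fin.castAdd (l + 1) i)
    rw [pSpan_append_mid (l := l + 1) M u v ⟨k, hk⟩ rfl]
    refine ⟨l + 1, cd_quot I M u v hx (h _ hx) hc, ara_quot I M u v ha hx, fun y hy _ => ?_⟩
    refine weak_quot I M u y (h _ ⟨?_, (rad_iff_append I M u y hu).2 hy.2⟩)
    intro j
    refine Fin.addCases (m := k) (n := l + 1) (fun i => ?_) (fun i => ?_) j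
    · simpa using hu i
    · simpa using hy.1 i
  · intro h
    refine ⟨c, hc, ha, fun x hx k m hm r hr => ?_⟩
    obtain ⟨k, hk⟩ := k
    obtain ⟨l, rfl⟩ := Nat.exists_eq_add_of_lt hk
    obtain ⟨u, v, rfl⟩ : ∃ (u : Fin k → R) (v : Fin (l + 1) → R), x = Fin.append u v :=
      ⟨_, _, (Fin.append_castAdd_natAdd (m := k) (n := l + 1) (f := x)).symm⟩
    have hu : ∀ i, u i ∈ I := fun i => by simpa using hx.1 (Fin.castAdd (l + 1) i)
    have hv : ∀ i, v i ∈ I := fun i => by simpa using hx.1 (Fin.natAdd k i)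
    have h1 := h _ hx ⟨k, hk⟩
    have hp := pSpan_append_mid (l := l + 1) M u v ⟨k, hk⟩ rfl
    rw [hp] at h1 hm ⊢
    obtain ⟨l', -, ha', h2⟩ := h1
    obtain rfl : l' = l + 1 := ha'.unique (ara_quot I M u v ha hx)
    have h3 := h2 (fun i => v i ^ 2) (rsop_pow I _ v ⟨hv, (rad_iff_append I M u v hu).1 hx.2⟩
      (fun _ => 2) (fun _ => by norm_num)) (fun i => Ideal.pow_mem_pow (hv i) 2) 0
      (Submodule.Quotient.mk m)
    have h4 : Fin.append u v ⟨k, hk⟩ = v 0 := by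
      have : (⟨k, hk⟩ : Fin (k + (l + 1))) = Fin.natAdd k 0 := by ext; simp
      exact (congrArg _ this).trans (Fin.append_right u v 0)
    change Fin.append u v ⟨k, hk⟩ • m ∈ _ at hm
    rw [h4] at hm
    have h5 : (Submodule.Quotient.mk (v 0 • m) : M ⧸ Ideal.span (Set.range u) • (⊤ : Submodule R M)) = 0 :=
      (Submodule.Quotient.mk_eq_zero _).2 hm
    have h6 := h3 (by
      beta_reduce
      rw [← Submodule.Quotient.mk_smul, pow_two, mul_smul, Submodule.Quotient.mk_smul, h5, smul_zero]
      exact zero_mem _) r hr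
    simpa [pSpan, ← Submodule.Quotient.mk_smul, Submodule.Quotient.mk_eq_zero] using h6
end
end
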